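/- arXiv:2212.05523 — 5 statements merged into one kernel-verified Lean document; each statement's English description precedes it below -/
import Mathlib

section
/- Let c, C_v, a, σ₀ > 0 be constants, x_L < x_R real numbers, t_f > 0, and let Q = (0,t_f) × (x_L,x_R) × (−1,1) and Q' = (0,t_f) × (x_L,x_R). Let σ : [0,t_f] × [x_L,x_R] → ℝ be continuous, and let g : [0,t_f] × [x_L,x_R] × [−1,1] → ℝ, ρ, T : [0,t_f] × [x_L,x_R] → ℝ be continuously differentiable (fixed, independent of ε). For ε > 0 define the governing-equation loss L_g^ε = ‖(ε²/c)∂_t g + ε μ ∂_x g − ε⟨μ ∂_x g⟩ + √σ₀ μ ∂_x ρ + σ g‖²_{L²(Q)} + ‖(1/c)∂_t ρ + (1/√σ₀)⟨μ ∂_x g⟩ + (1/2)C_v ∂_t T‖²_{L²(Q')} + ‖ε² C_v ∂_t T − σ(2ρ − acT⁴)‖²_{L²(Q')}. Then lim_{ε → 0⁺} L_g^ε = ‖√σ₀ μ ∂_x ρ + σ g‖²_{L²(Q)} + ‖(1/c)∂_t ρ + (1/√σ₀)⟨μ ∂_x g⟩ + (1/2)C_v ∂_t T‖²_{L²(Q')}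 + ‖σ(2ρ − acT⁴)‖²_{L²(Q')}. -/
open MeasureTheory

/-- The angular average `⟨h⟩ = (1/2) ∫_{−1}^{1} h(μ) dμ`. -/
noncomputable def avg (h : ℝ → ℝ) : ℝ := (1 / 2) * ∫ μ in (-1 : ℝ)..1, h μ

theorem exists_cont_ext {E : Type*} [NormedAddCommGroup E] {f : E → ℝ} {K : Set E}
    (hK : IsClosed K) (hf : ContinuousOn f K) : ∃ F : E → ℝ, Continuous F ∧ ∀ p ∈ K, f p = F p := by
  obtain ⟨G, hG⟩ := ContinuousMap.exists_restrict_eq hK (⟨K.domRestrict f, hf.domRestrict⟩ : C(K, ℝ))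
  refine ⟨G, G.continuous, fun p hp => ?_⟩
  have := congrArg (fun h : C(K, ℝ) => h ⟨p, hp⟩) hG
  exact this.symm

theorem exists_deriv_ext {E : Type*} [NormedAddCommGroup E] [NormedSpace ℝ E] {f : E → ℝ}
    {K : Set E} (hK : IsClosed K) (hc : Convex ℝ K) (hi : (interior K).Nonempty)
    (hf : ContDiffOn ℝ 1 f K) (v : E) :
    ∃ F : E → ℝ, Continuous F ∧ ∀ (γ : ℝ → E) (s : ℝ), HasDerivAt γ v s → γ s ∈ interior K →
      deriv (fun r => f (γ r)) s = F (γ s) := by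
  have hu : UniqueDiffOn ℝ K := uniqueDiffOn_convex hc hi
  have h1 : ContinuousOn (fun p => fderivWithin ℝ f K p v) K :=
    (hf.continuousOn_fderivWithin hu le_rfl).clm_apply continuousOn_const
  obtain ⟨F, hF, hFe⟩ := exists_cont_ext hK h1
  refine ⟨F, hF, fun γ s hγ hs => ?_⟩
  rw [← hFe _ (interior_subset hs)]
  have hn : K ∈ nhds (γ s) := mem_interior_iff_mem_nhds.mp hs
  have hd : HasFDerivAt f (fderivWithin ℝ f K (γ s)) (γ s) :=
    ((hf.differentiableOn one_ne_zero _ (interior_subset hs)).hasFDerivWithinAt).hasFDerivAt hn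
  exact (hd.comp_hasDerivAt s hγ).deriv

theorem ii_congr {a b : ℝ} (hab : a ≤ b) {f h : ℝ → ℝ} (H : ∀ x ∈ Set.Ioo a b, f x = h x) :
    ∫ x in a..b, f x = ∫ x in a..b, h x := by
  rw [intervalIntegral.integral_of_le hab, intervalIntegral.integral_of_le hab,
    integral_Ioc_eq_integral_Ioo, integral_Ioc_eq_integral_Ioo]
  exact setIntegral_congr_fun measurableSet_Ioo H

theorem cont_int {X : Type*} [TopologicalSpace X] {a b : ℝ} {f : X → ℝ → ℝ}
    (hf : Continuous (fun p : X × ℝ => f p.1 p.2)) : Continuous (fun x => ∫ t in a..b, f x t) :=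
  intervalIntegral.continuous_parametric_intervalIntegral_of_continuous' hf a b

/-- Asymptotic-preserving property of the micro–macro (APNN) governing-equation loss:
as `ε → 0⁺`, the loss converges to the residual loss of the limit system
characterizing the nonlinear diffusion limit. -/
theorem apnn_loss_ap_property
    (a c Cv σ₀ : ℝ) (ha : 0 < a) (hc : 0 < c) (hCv : 0 < Cv) (hσ₀ : 0 < σ₀)
    (xL xR : ℝ) (hx : xL < xR) (tf : ℝ) (htf : 0 < tf)
    (σ : ℝ → ℝ → ℝ)
    (hσ : ContinuousOn (fun p : ℝ × ℝ => σ p.1 p.2)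
      (Set.Icc (0 : ℝ) tf ×ˢ Set.Icc xL xR))
    (g : ℝ → ℝ → ℝ → ℝ) (ρ T : ℝ → ℝ → ℝ)
    (hg : ContDiffOn ℝ 1 (fun p : ℝ × ℝ × ℝ => g p.1 p.2.1 p.2.2)
      (Set.Icc (0 : ℝ) tf ×ˢ (Set.Icc xL xR ×ˢ Set.Icc (-1 : ℝ) 1)))
    (hρ : ContDiffOn ℝ 1 (fun p : ℝ × ℝ => ρ p.1 p.2)
      (Set.Icc (0 : ℝ) tf ×ˢ Set.Icc xL xR))
    (hT : ContDiffOn ℝ 1 (fun p : ℝ × ℝ => T p.1 p.2)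
      (Set.Icc (0 : ℝ) tf ×ˢ Set.Icc xL xR)) :
    Filter.Tendsto (fun ε : ℝ =>
      (∫ t in (0 : ℝ)..tf, ∫ x in xL..xR, ∫ μ in (-1 : ℝ)..1,
        ((ε ^ 2 / c) * deriv (fun s => g s x μ) t + ε * μ * deriv (fun y => g t y μ) x
          - ε * avg (fun μ' => μ' * deriv (fun y => g t y μ') x)
          + Real.sqrt σ₀ * μ * deriv (fun y => ρ t y) x + σ t x * g t x μ) ^ 2)
      + (∫ t in (0 : ℝ)..tf, ∫ x in xL..xR,
        ((1 / c) * deriv (fun s => ρ s x) t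
          + (1 / Real.sqrt σ₀) * avg (fun μ' => μ' * deriv (fun y => g t y μ') x)
          + (1 / 2) * Cv * deriv (fun s => T s x) t) ^ 2)
      + (∫ t in (0 : ℝ)..tf, ∫ x in xL..xR,
        (ε ^ 2 * Cv * deriv (fun s => T s x) t
          - σ t x * (2 * ρ t x - a * c * (T t x) ^ 4)) ^ 2))
      (nhdsWithin 0 (Set.Ioi 0))
      (nhds
        ((∫ t in (0 : ℝ)..tf, ∫ x in xL..xR, ∫ μ in (-1 : ℝ)..1,
          (Real.sqrt σ₀ * μ * deriv (fun y => ρ t y) x + σ t x * g t x μ) ^ 2)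
        + (∫ t in (0 : ℝ)..tf, ∫ x in xL..xR,
          ((1 / c) * deriv (fun s => ρ s x) t
            + (1 / Real.sqrt σ₀) * avg (fun μ' => μ' * deriv (fun y => g t y μ') x)
            + (1 / 2) * Cv * deriv (fun s => T s x) t) ^ 2)
        + (∫ t in (0 : ℝ)..tf, ∫ x in xL..xR,
          (σ t x * (2 * ρ t x - a * c * (T t x) ^ 4)) ^ 2))) := by
  set K2 := Set.Icc (0 : ℝ) tf ×ˢ Set.Icc xL xR with hK2
  set K3 := Set.Icc (0 : ℝ) tf ×ˢ (Set.Icc xL xR ×ˢ Set.Icc (-1 : ℝ) 1) with hK3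
  have c2 : IsClosed K2 := isClosed_Icc.prod isClosed_Icc
  have c3 : IsClosed K3 := isClosed_Icc.prod (isClosed_Icc.prod isClosed_Icc)
  have v2 : Convex ℝ K2 := (convex_Icc _ _).prod (convex_Icc _ _)
  have v3 : Convex ℝ K3 := (convex_Icc _ _).prod ((convex_Icc _ _).prod (convex_Icc _ _))
  have i2 : ∀ t ∈ Set.Ioo 0 tf, ∀ x ∈ Set.Ioo xL xR, (t, x) ∈ interior K2 := by
    intro t ht x hx
    rw [hK2, interior_prod_eq, interior_Icc, interior_Icc]
    exact ⟨ht, hx⟩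
  have i3 : ∀ t ∈ Set.Ioo 0 tf, ∀ x ∈ Set.Ioo xL xR, ∀ μ ∈ Set.Ioo (-1 : ℝ) 1,
      (t, x, μ) ∈ interior K3 := by
    intro t ht x hx μ hμ
    rw [hK3, interior_prod_eq, interior_prod_eq, interior_Icc, interior_Icc, interior_Icc]
    exact ⟨ht, hx, hμ⟩
  have mt : tf / 2 ∈ Set.Ioo 0 tf := ⟨by linarith, by linarith⟩
  have mx : (xL + xR) / 2 ∈ Set.Ioo xL xR := ⟨by linarith, by linarith⟩
  have mm : (0 : ℝ) ∈ Set.Ioo (-1 : ℝ) 1 := ⟨by norm_num, by norm_num⟩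
  have n2 : (interior K2).Nonempty := ⟨_, i2 _ mt _ mx⟩
  have n3 : (interior K3).Nonempty := ⟨_, i3 _ mt _ mx _ mm⟩
  obtain ⟨S, hS, eS⟩ := exists_cont_ext c2 hσ
  obtain ⟨R, hR, eR⟩ := exists_cont_ext c2 hρ.continuousOn
  obtain ⟨U, hU, eU⟩ := exists_cont_ext c2 hT.continuousOn
  obtain ⟨G, hG, eG⟩ := exists_cont_ext c3 hg.continuousOn
  obtain ⟨Rt, hRt, eRt⟩ := exists_deriv_ext c2 v2 n2 hρ (1, 0)
  obtain ⟨Rx, hRx, eRx⟩ := exists_deriv_ext c2 v2 n2 hρ (0, 1)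
  obtain ⟨Ut, hUt, eUt⟩ := exists_deriv_ext c2 v2 n2 hT (1, 0)
  obtain ⟨Gt, hGt, eGt⟩ := exists_deriv_ext c3 v3 n3 hg (1, 0, 0)
  obtain ⟨Gx, hGx, eGx⟩ := exists_deriv_ext c3 v3 n3 hg (0, 1, 0)
  have fS : ∀ t ∈ Set.Ioo 0 tf, ∀ x ∈ Set.Ioo xL xR, σ t x = S (t, x) :=
    fun t ht x hx => eS _ (interior_subset (i2 t ht x hx))
  have fR : ∀ t ∈ Set.Ioo 0 tf, ∀ x ∈ Set.Ioo xL xR, ρ t x = R (t, x) :=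
    fun t ht x hx => eR _ (interior_subset (i2 t ht x hx))
  have fU : ∀ t ∈ Set.Ioo 0 tf, ∀ x ∈ Set.Ioo xL xR, T t x = U (t, x) :=
    fun t ht x hx => eU _ (interior_subset (i2 t ht x hx))
  have fG : ∀ t ∈ Set.Ioo 0 tf, ∀ x ∈ Set.Ioo xL xR, ∀ μ ∈ Set.Ioo (-1 : ℝ) 1,
      g t x μ = G (t, x, μ) :=
    fun t ht x hx μ hμ => eG _ (interior_subset (i3 t ht x hx μ hμ))
  have fRt : ∀ t ∈ Set.Ioo 0 tf, ∀ x ∈ Set.Ioo xL xR, deriv (fun s => ρ s x) t = Rt (t, x) :=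
    fun t ht x hx => eRt (fun s => (s, x)) t
      ((hasDerivAt_id t).prodMk (hasDerivAt_const t x)) (i2 t ht x hx)
  have fUt : ∀ t ∈ Set.Ioo 0 tf, ∀ x ∈ Set.Ioo xL xR, deriv (fun s => T s x) t = Ut (t, x) :=
    fun t ht x hx => eUt (fun s => (s, x)) t
      ((hasDerivAt_id t).prodMk (hasDerivAt_const t x)) (i2 t ht x hx)
  have fRx : ∀ t ∈ Set.Ioo 0 tf, ∀ x ∈ Set.Ioo xL xR, deriv (fun y => ρ t y) x = Rx (t, x) :=
    fun t ht x hx => eRx (fun y => (t, y)) x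
      ((hasDerivAt_const x t).prodMk (hasDerivAt_id x)) (i2 t ht x hx)
  have fGt : ∀ t ∈ Set.Ioo 0 tf, ∀ x ∈ Set.Ioo xL xR, ∀ μ ∈ Set.Ioo (-1 : ℝ) 1,
      deriv (fun s => g s x μ) t = Gt (t, x, μ) :=
    fun t ht x hx μ hμ => eGt (fun s => (s, x, μ)) t
      ((hasDerivAt_id t).prodMk ((hasDerivAt_const t x).prodMk (hasDerivAt_const t μ)))
      (i3 t ht x hx μ hμ)
  have fGx : ∀ t ∈ Set.Ioo 0 tf, ∀ x ∈ Set.Ioo xL xR, ∀ μ ∈ Set.Ioo (-1 : ℝ) 1,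
      deriv (fun y => g t y μ) x = Gx (t, x, μ) :=
    fun t ht x hx μ hμ => eGx (fun y => (t, y, μ)) x
      ((hasDerivAt_const x t).prodMk ((hasDerivAt_id x).prodMk (hasDerivAt_const x μ)))
      (i3 t ht x hx μ hμ)
  obtain ⟨A, hA, fA⟩ : ∃ A : ℝ × ℝ → ℝ, Continuous A ∧ ∀ t ∈ Set.Ioo 0 tf, ∀ x ∈ Set.Ioo xL xR,
      avg (fun μ' => μ' * deriv (fun y => g t y μ') x) = A (t, x) := by
    refine ⟨fun p => (1 / 2) * ∫ μ in (-1 : ℝ)..1, μ * Gx (p.1, p.2, μ), ?_, ?_⟩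
    · refine continuous_const.mul (cont_int ?_)
      fun_prop
    · intro t ht x hx
      unfold avg
      congr 1
      exact ii_congr (by norm_num) fun μ hμ => by rw [fGx t ht x hx μ hμ]
  have k1 : Continuous fun ε : ℝ => ∫ t in (0 : ℝ)..tf, ∫ x in xL..xR, ∫ μ in (-1 : ℝ)..1,
        ((ε ^ 2 / c) * Gt (t, x, μ) + ε * μ * Gx (t, x, μ) - ε * A (t, x)
          + Real.sqrt σ₀ * μ * Rx (t, x) + S (t, x) * G (t, x, μ)) ^ 2 := by
    refine cont_int (cont_int (cont_int ?_))
    fun_prop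
  have k3 : Continuous fun ε : ℝ => ∫ t in (0 : ℝ)..tf, ∫ x in xL..xR,
        (ε ^ 2 * Cv * Ut (t, x) - S (t, x) * (2 * R (t, x) - a * c * (U (t, x)) ^ 4)) ^ 2 := by
    refine cont_int (cont_int ?_)
    fun_prop
  refine Filter.Tendsto.add (Filter.Tendsto.add ?_ tendsto_const_nhds) ?_
  · have := (k1.tendsto 0).mono_left (nhdsWithin_le_nhds (s := Set.Ioi 0))
    convert this using 2 with ε
    · refine ii_congr htf.le fun t ht => ii_congr hx.le fun x hx => ii_congr (by norm_num)
        fun μ hμ => ?_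
      rw [fGt t ht x hx μ hμ, fGx t ht x hx μ hμ, fA t ht x hx, fRx t ht x hx, fS t ht x hx,
        fG t ht x hx μ hμ]
    · refine ii_congr htf.le fun t ht => ii_congr hx.le fun x hx => ii_congr (by norm_num)
        fun μ hμ => ?_
      rw [fRx t ht x hx, fS t ht x hx, fG t ht x hx μ hμ]
      ring
  · have := (k3.tendsto 0).mono_left (nhdsWithin_le_nhds (s := Set.Ioi 0))
    convert this using 2 with ε
    · refine ii_congr htf.le fun t ht => ii_congr hx.le fun x hx => ?_
      rw [fUt t ht x hx, fS t ht x hx, fR t ht x hx, fU t ht x hx]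
    · refine ii_congr htf.le fun t ht => ii_congr hx.le fun x hx => ?_
      rw [fS t ht x hx, fR t ht x hx, fU t ht x hx]
      ring
end

section
/- Let a, c, ε, σ₀ > 0 be constants, x_L < x_R real numbers, t_f > 0. Let σ, T, T*, r₁, r₃ : [0,t_f] × [x_L,x_R] → ℝ be continuous and r₂, Ĩ : [0,t_f] × [x_L,x_R] × [−1,1] → ℝ with Ĩ continuously differentiable and r₂ continuous. Suppose (ε²/c)∂_t Ĩ + σ Ĩ + ε μ ∂_x Ĩ + (1/2)r₃ − (σ a c/2)(T⁴ − T*⁴) = ε² r₁ + (ε/√σ₀) r₂ holds pointwise on (0,t_f) × (x_L,x_R) × (−1,1). Then for every t ∈ (0,t_f): (ε²/(2c))·(d/dt)∫_{x_L}^{x_R}∫_{−1}^{1} Ĩ² dμ dx + ∫_{x_L}^{x_R}∫_{−1}^{1} σ Ĩ² dμ dx + (ε/2)·( ∫_{0}^{1} μ·Ĩ(t,x_R,μ)² dμ + ∫_{−1}^{0} |μ|·Ĩ(t,x_L,μ)² dμ ) = ε² ∫∫ r₁ Ĩ dμ dx + (ε/√σ₀) ∫∫ r₂ Ĩ dμ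 dx − (1/2) ∫∫ r₃ Ĩ dμ dx + (a c/2) ∫∫ σ (T⁴ − T*⁴) Ĩ dμ dx + (ε/2)·( ∫_{0}^{1} μ·Ĩ(t,x_L,μ)² dμ + ∫_{−1}^{0} |μ|·Ĩ(t,x_R,μ)² dμ ), where all double integrals are over (x_L,x_R) × (−1,1). -/
open MeasureTheory

namespace EnergyAux

lemma integrableOn_box {xL xR : ℝ} {g : ℝ × ℝ → ℝ}
    (hg : ContinuousOn g (Set.Icc xL xR ×ˢ Set.Icc (-1 : ℝ) 1)) :
    IntegrableOn g (Set.Ioo xL xR ×ˢ Set.Ioo (-1 : ℝ) 1) :=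
  (hg.integrableOn_compact (isCompact_Icc.prod isCompact_Icc)).mono_set
    (Set.prod_mono Set.Ioo_subset_Icc_self Set.Ioo_subset_Icc_self)

lemma integral_box {xL xR : ℝ} (hx : xL < xR) {g : ℝ → ℝ → ℝ}
    (hg : ContinuousOn (fun p : ℝ × ℝ => g p.1 p.2) (Set.Icc xL xR ×ˢ Set.Icc (-1 : ℝ) 1)) :
    (∫ x in xL..xR, ∫ μ in (-1 : ℝ)..1, g x μ)
      = ∫ p in Set.Ioo xL xR ×ˢ Set.Ioo (-1 : ℝ) 1, g p.1 p.2 := by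
  have h := setIntegral_prod (μ := (volume : Measure ℝ)) (ν := (volume : Measure ℝ)) _
    (integrableOn_box hg)
  rw [Measure.volume_eq_prod, h, intervalIntegral.integral_of_le hx.le,
    integral_Ioc_eq_integral_Ioo]
  congr 1
  ext x
  rw [intervalIntegral.integral_of_le (by norm_num), integral_Ioc_eq_integral_Ioo]

lemma integral_box_swap {xL xR : ℝ} (hx : xL < xR) {g : ℝ → ℝ → ℝ}
    (hg : ContinuousOn (fun p : ℝ × ℝ => g p.1 p.2) (Set.Icc xL xR ×ˢ Set.Icc (-1 : ℝ) 1)) :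
    (∫ p in Set.Ioo xL xR ×ˢ Set.Ioo (-1 : ℝ) 1, g p.1 p.2)
      = ∫ μ in (-1 : ℝ)..1, ∫ x in xL..xR, g x μ := by
  have h := setIntegral_prod (μ := (volume : Measure ℝ)) (ν := (volume : Measure ℝ)) _
    (integrableOn_box hg)
  have hi : IntegrableOn (fun p : ℝ × ℝ => g p.1 p.2)
    (Set.Ioo xL xR ×ˢ Set.Ioo (-1 : ℝ) 1) (volume.prod volume) := integrableOn_box hg
  rw [IntegrableOn, ← Measure.prod_restrict] at hi
  have h2 := integral_integral_swap (f := g) hi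
  rw [Measure.volume_eq_prod, h, h2, intervalIntegral.integral_of_le (by norm_num),
    integral_Ioc_eq_integral_Ioo]
  congr 1
  ext x
  rw [intervalIntegral.integral_of_le hx.le, integral_Ioc_eq_integral_Ioo]

lemma angular {h : ℝ → ℝ} (hh : ContinuousOn h (Set.Icc (-1 : ℝ) 1)) :
    (∫ μ in (-1 : ℝ)..1, μ * h μ)
      = (∫ μ in (0 : ℝ)..1, μ * h μ) - ∫ μ in (-1 : ℝ)..0, |μ| * h μ := by
  have hc : ContinuousOn (fun μ => μ * h μ) (Set.Icc (-1 : ℝ) 1) := continuousOn_id.mul hh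
  have h1 : IntervalIntegrable (fun μ => μ * h μ) volume (-1) 0 :=
    (hc.mono (by rw [Set.uIcc_of_le (by norm_num)]; exact Set.Icc_subset_Icc le_rfl (by norm_num))).intervalIntegrable
  have h2 : IntervalIntegrable (fun μ => μ * h μ) volume 0 1 :=
    (hc.mono (by rw [Set.uIcc_of_le (by norm_num)]; exact Set.Icc_subset_Icc (by norm_num) le_rfl)).intervalIntegrable
  rw [← intervalIntegral.integral_add_adjacent_intervals h1 h2]
  have : (∫ μ in (-1 : ℝ)..0, |μ| * h μ) = ∫ μ in (-1 : ℝ)..0, -(μ * h μ) := by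
    apply intervalIntegral.integral_congr
    intro μ hμ
    rw [Set.uIcc_of_le (by norm_num)] at hμ
    simp only [abs_of_nonpos hμ.2]
    ring
  rw [this, intervalIntegral.integral_neg]
  ring

lemma sq_deriv {f : ℝ → ℝ} {d x : ℝ} (h : HasDerivAt f d x) :
    HasDerivAt (fun y => f y ^ 2) (2 * (f x * d)) x := by
  have h2 := h.fun_pow 2
  have e : 2 * (f x * d) = ((2 : ℕ) : ℝ) * f x ^ (2 - 1) * d := by
    norm_num
    ring
  rw [e]
  exact h2

lemma lin {ν : Measure (ℝ × ℝ)} {f1 f2 f3 f4 f5 f6 f7 : ℝ × ℝ → ℝ} (b1 b3 b4 b5 b6 b7 : ℝ)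
    (h1 : Integrable f1 ν) (h2 : Integrable f2 ν) (h3 : Integrable f3 ν) (h4 : Integrable f4 ν)
    (h5 : Integrable f5 ν) (h6 : Integrable f6 ν) (h7 : Integrable f7 ν)
    (h : (∫ p, (b1 * f1 p + f2 p + b3 * f3 p + b4 * f4 p - b5 * f5 p) ∂ν)
      = ∫ p, (b6 * f6 p + b7 * f7 p) ∂ν) :
    b1 * (∫ p, f1 p ∂ν) + (∫ p, f2 p ∂ν) + b3 * (∫ p, f3 p ∂ν) + b4 * (∫ p, f4 p ∂ν)
      - b5 * (∫ p, f5 p ∂ν) = b6 * (∫ p, f6 p ∂ν) + b7 * (∫ p, f7 p ∂ν) := by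
  have i1 := h1.const_mul b1
  have i3 := h3.const_mul b3
  have i4 := h4.const_mul b4
  have i5 := h5.const_mul b5
  have i6 := h6.const_mul b6
  have i7 := h7.const_mul b7
  have j2 : Integrable (fun p => b1 * f1 p + f2 p) ν := i1.add h2
  have j3 : Integrable (fun p => b1 * f1 p + f2 p + b3 * f3 p) ν := j2.add i3
  have j4 : Integrable (fun p => b1 * f1 p + f2 p + b3 * f3 p + b4 * f4 p) ν := j3.add i4
  rw [integral_sub j4 i5, integral_add j3 i4, integral_add j2 i3, integral_add i1 h2,
    integral_add i6 i7] at h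
  simpa only [integral_const_mul] using h

end EnergyAux

/-- The basic L² energy identity obtained by testing the combined residual transport
equation for the intensity error `Ĩ` by `Ĩ` and integrating over the slab `(x_L,x_R)`
and the angular variable `μ ∈ (−1,1)`. -/
theorem energy_identity_for_intensity_error
    (a c ε σ₀ : ℝ) (ha : 0 < a) (hc : 0 < c) (hε : 0 < ε) (hσ₀ : 0 < σ₀)
    (xL xR : ℝ) (hx : xL < xR) (tf : ℝ) (htf : 0 < tf)
    (σ T Tstar r1 r3 : ℝ → ℝ → ℝ) (r2 It : ℝ → ℝ → ℝ → ℝ)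
    (hσ : ContinuousOn (fun p : ℝ × ℝ => σ p.1 p.2)
      (Set.Icc (0 : ℝ) tf ×ˢ Set.Icc xL xR))
    (hT : ContinuousOn (fun p : ℝ × ℝ => T p.1 p.2)
      (Set.Icc (0 : ℝ) tf ×ˢ Set.Icc xL xR))
    (hTstar : ContinuousOn (fun p : ℝ × ℝ => Tstar p.1 p.2)
      (Set.Icc (0 : ℝ) tf ×ˢ Set.Icc xL xR))
    (hr1 : ContinuousOn (fun p : ℝ × ℝ => r1 p.1 p.2)
      (Set.Icc (0 : ℝ) tf ×ˢ Set.Icc xL xR))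
    (hr3 : ContinuousOn (fun p : ℝ × ℝ => r3 p.1 p.2)
      (Set.Icc (0 : ℝ) tf ×ˢ Set.Icc xL xR))
    (hr2 : ContinuousOn (fun p : ℝ × ℝ × ℝ => r2 p.1 p.2.1 p.2.2)
      (Set.Icc (0 : ℝ) tf ×ˢ (Set.Icc xL xR ×ˢ Set.Icc (-1 : ℝ) 1)))
    (hIt : ContDiffOn ℝ 1 (fun p : ℝ × ℝ × ℝ => It p.1 p.2.1 p.2.2)
      (Set.Icc (0 : ℝ) tf ×ˢ (Set.Icc xL xR ×ˢ Set.Icc (-1 : ℝ) 1)))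
    (heq : ∀ t ∈ Set.Ioo (0 : ℝ) tf, ∀ x ∈ Set.Ioo xL xR, ∀ μ ∈ Set.Ioo (-1 : ℝ) 1,
      (ε ^ 2 / c) * deriv (fun s => It s x μ) t + σ t x * It t x μ
          + ε * μ * deriv (fun y => It t y μ) x + (1 / 2) * r3 t x
          - (σ t x * a * c / 2) * ((T t x) ^ 4 - (Tstar t x) ^ 4)
        = ε ^ 2 * r1 t x + (ε / Real.sqrt σ₀) * r2 t x μ) :
    ∀ t ∈ Set.Ioo (0 : ℝ) tf,
      (ε ^ 2 / (2 * c)) *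
          deriv (fun s => ∫ x in xL..xR, ∫ μ in (-1 : ℝ)..1, (It s x μ) ^ 2) t
        + (∫ x in xL..xR, ∫ μ in (-1 : ℝ)..1, σ t x * (It t x μ) ^ 2)
        + (ε / 2) * ((∫ μ in (0 : ℝ)..1, μ * (It t xR μ) ^ 2)
            + (∫ μ in (-1 : ℝ)..0, |μ| * (It t xL μ) ^ 2))
      = ε ^ 2 * (∫ x in xL..xR, ∫ μ in (-1 : ℝ)..1, r1 t x * It t x μ)
        + (ε / Real.sqrt σ₀) * (∫ x in xL..xR, ∫ μ in (-1 : ℝ)..1, r2 t x μ * It t x μ)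
        - (1 / 2) * (∫ x in xL..xR, ∫ μ in (-1 : ℝ)..1, r3 t x * It t x μ)
        + (a * c / 2) * (∫ x in xL..xR, ∫ μ in (-1 : ℝ)..1,
            σ t x * ((T t x) ^ 4 - (Tstar t x) ^ 4) * It t x μ)
        + (ε / 2) * ((∫ μ in (0 : ℝ)..1, μ * (It t xL μ) ^ 2)
            + (∫ μ in (-1 : ℝ)..0, |μ| * (It t xR μ) ^ 2)) := by
  intro t ht
  have htI : t ∈ Set.Icc (0 : ℝ) tf := Set.Ioo_subset_Icc_self ht
  set K : Set (ℝ × ℝ × ℝ) := Set.Icc (0 : ℝ) tf ×ˢ (Set.Icc xL xR ×ˢ Set.Icc (-1 : ℝ) 1) with hK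
  set F : ℝ × ℝ × ℝ → ℝ := fun p => It p.1 p.2.1 p.2.2 with hF
  set R : Set (ℝ × ℝ) := Set.Icc xL xR ×ˢ Set.Icc (-1 : ℝ) 1 with hR
  set S : Set (ℝ × ℝ) := Set.Ioo xL xR ×ˢ Set.Ioo (-1 : ℝ) 1 with hS
  have hSR : S ⊆ R := Set.prod_mono Set.Ioo_subset_Icc_self Set.Ioo_subset_Icc_self
  have hSm : MeasurableSet S := measurableSet_Ioo.prod measurableSet_Ioo
  have hu : UniqueDiffOn ℝ K :=
    (uniqueDiffOn_Icc htf).prod ((uniqueDiffOn_Icc hx).prod (uniqueDiffOn_Icc (by norm_num)))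
  have hD : ContinuousOn (fderivWithin ℝ F K) K := hIt.continuousOn_fderivWithin hu le_rfl
  have hFc : ContinuousOn F K := hIt.continuousOn
  set Dt : ℝ × ℝ × ℝ → ℝ := fun p => fderivWithin ℝ F K p (1, 0, 0) with hDt
  set Dx : ℝ × ℝ × ℝ → ℝ := fun p => fderivWithin ℝ F K p (0, 1, 0) with hDx
  have hDtc : ContinuousOn Dt K := hD.clm_apply continuousOn_const
  have hDxc : ContinuousOn Dx K := hD.clm_apply continuousOn_const
  have hFd : ∀ p ∈ K, HasFDerivWithinAt F (fderivWithin ℝ F K p) K p := fun p hp =>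
    ((hIt.differentiableOn one_ne_zero) p hp).hasFDerivWithinAt
  have hdt : ∀ s ∈ Set.Ioo (0 : ℝ) tf, ∀ p ∈ R,
      HasDerivAt (fun s => It s p.1 p.2) (Dt (s, p)) s := by
    intro s hs p hp
    have h1 : HasDerivWithinAt (fun s : ℝ => (s, p)) ((1 : ℝ), (0 : ℝ × ℝ)) (Set.Icc 0 tf) s :=
      ((hasDerivAt_id s).prodMk (hasDerivAt_const s p)).hasDerivWithinAt
    have h2 := (hFd (s, p) ⟨Set.Ioo_subset_Icc_self hs, hp⟩).comp_hasDerivWithinAt s h1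
      (fun r hr => Set.mk_mem_prod hr hp)
    exact h2.hasDerivAt (Icc_mem_nhds hs.1 hs.2)
  have hdx : ∀ x ∈ Set.Ioo xL xR, ∀ μ ∈ Set.Icc (-1 : ℝ) 1,
      HasDerivAt (fun y => It t y μ) (Dx (t, x, μ)) x := by
    intro x hxx μ hμ
    have h1 : HasDerivWithinAt (fun y : ℝ => (t, y, μ)) ((0 : ℝ), ((1 : ℝ), (0 : ℝ)))
        (Set.Icc xL xR) x :=
      ((hasDerivAt_const x t).prodMk
        ((hasDerivAt_id x).prodMk (hasDerivAt_const x μ))).hasDerivWithinAt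
    have h2 := (hFd (t, x, μ) ⟨htI, Set.Ioo_subset_Icc_self hxx, hμ⟩).comp_hasDerivWithinAt x h1
      (fun r hr => Set.mk_mem_prod htI (Set.mk_mem_prod hr hμ))
    exact h2.hasDerivAt (Icc_mem_nhds hxx.1 hxx.2)
  -- slices
  have slice3 : ∀ s ∈ Set.Icc (0 : ℝ) tf, ∀ {G : ℝ × ℝ × ℝ → ℝ}, ContinuousOn G K →
      ContinuousOn (fun p : ℝ × ℝ => G (s, p)) R := by
    intro s hs G hG
    exact hG.comp (by fun_prop) (fun p hp => ⟨hs, hp⟩)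
  have slice2 : ∀ {g : ℝ → ℝ → ℝ},
      ContinuousOn (fun p : ℝ × ℝ => g p.1 p.2) (Set.Icc (0 : ℝ) tf ×ˢ Set.Icc xL xR) →
      ContinuousOn (fun p : ℝ × ℝ => g t p.1) R := by
    intro g hg
    exact hg.comp (f := fun p : ℝ × ℝ => (t, p.1)) (by fun_prop) (fun p hp => ⟨htI, hp.1⟩)
  have cI : ContinuousOn (fun p : ℝ × ℝ => It t p.1 p.2) R := slice3 t htI hFc
  have cDt : ContinuousOn (fun p : ℝ × ℝ => Dt (t, p.1, p.2)) R := slice3 t htI hDtc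
  have cDx : ContinuousOn (fun p : ℝ × ℝ => Dx (t, p.1, p.2)) R := slice3 t htI hDxc
  have cr2 : ContinuousOn (fun p : ℝ × ℝ => r2 t p.1 p.2) R := slice3 t htI hr2
  have cσ := slice2 hσ
  have cT := slice2 hT
  have cTs := slice2 hTstar
  have cr1 := slice2 hr1
  have cr3 := slice2 hr3
  have cμ : ContinuousOn (fun p : ℝ × ℝ => p.2) R := continuousOn_snd
  -- time derivative
  have hderiv : deriv (fun s => ∫ x in xL..xR, ∫ μ in (-1 : ℝ)..1, (It s x μ) ^ 2) t
      = 2 * ∫ p in S, It t p.1 p.2 * Dt (t, p.1, p.2) := by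
    have hKc : IsCompact K := isCompact_Icc.prod (isCompact_Icc.prod isCompact_Icc)
    obtain ⟨C, hC⟩ := hKc.exists_bound_of_continuousOn
      (f := fun p => 2 * (F p * Dt p)) (continuousOn_const.mul (hFc.mul hDtc))
    have hnh : Set.Ioo (0 : ℝ) tf ∈ nhds t := Ioo_mem_nhds ht.1 ht.2
    have hsq : ∀ s ∈ Set.Ioo (0 : ℝ) tf, ContinuousOn (fun p : ℝ × ℝ => It s p.1 p.2 ^ 2) R :=
      fun s hs => (slice3 s (Set.Ioo_subset_Icc_self hs) hFc).pow 2
    have hSfin : volume S ≠ ⊤ := by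
      refine ne_top_of_le_ne_top ?_ (measure_mono hSR)
      exact (isCompact_Icc.prod isCompact_Icc).measure_lt_top.ne
    have key := hasDerivAt_integral_of_dominated_loc_of_deriv_le
      (μ := (volume : Measure (ℝ × ℝ)).restrict S)
      (F := fun s p => It s p.1 p.2 ^ 2)
      (F' := fun s p => 2 * (It s p.1 p.2 * Dt (s, p.1, p.2)))
      (x₀ := t) (bound := fun _ => C) hnh
      (by
        filter_upwards [hnh] with s hs
        exact (EnergyAux.integrableOn_box (hsq s hs)).aestronglyMeasurable)
      (EnergyAux.integrableOn_box (hsq t ht))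
      (EnergyAux.integrableOn_box
        (continuousOn_const.mul (cI.mul cDt))).aestronglyMeasurable
      (by
        filter_upwards [ae_restrict_mem hSm] with p hp s hs
        exact hC (s, p) ⟨Set.Ioo_subset_Icc_self hs, hSR hp⟩)
      (integrableOn_const hSfin)
      (by
        filter_upwards [ae_restrict_mem hSm] with p hp s hs
        exact EnergyAux.sq_deriv (hdt s hs p (hSR hp)))
    have he : (fun s => ∫ x in xL..xR, ∫ μ in (-1 : ℝ)..1, (It s x μ) ^ 2)
        =ᶠ[nhds t] fun s => ∫ p in S, It s p.1 p.2 ^ 2 := by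
      filter_upwards [hnh] with s hs
      exact EnergyAux.integral_box hx (g := fun x μ => It s x μ ^ 2) (hsq s hs)
    rw [he.deriv_eq, key.2.deriv, integral_const_mul]
  -- transport term
  have htrans : 2 * (∫ p in S, p.2 * (It t p.1 p.2 * Dx (t, p.1, p.2)))
      = (∫ μ in (-1 : ℝ)..1, μ * It t xR μ ^ 2) - ∫ μ in (-1 : ℝ)..1, μ * It t xL μ ^ 2 := by
    have cg : ContinuousOn (fun p : ℝ × ℝ => p.2 * (It t p.1 p.2 * Dx (t, p.1, p.2))) R :=
      cμ.mul (cI.mul cDx)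
    rw [EnergyAux.integral_box_swap hx (g := fun x μ => μ * (It t x μ * Dx (t, x, μ))) cg,
      ← intervalIntegral.integral_const_mul, ← intervalIntegral.integral_sub]
    · apply intervalIntegral.integral_congr
      intro μ hμ
      rw [Set.uIcc_of_le (by norm_num)] at hμ
      have hm : Set.MapsTo (fun x : ℝ => (x, μ)) (Set.Icc xL xR) R := fun x hxx => ⟨hxx, hμ⟩
      have c1 : ContinuousOn (fun x => μ * It t x μ ^ 2) (Set.Icc xL xR) :=
        continuousOn_const.mul ((cI.comp (by fun_prop) hm).pow 2)
      have c2 : ContinuousOn (fun x => 2 * (μ * (It t x μ * Dx (t, x, μ)))) (Set.Icc xL xR) :=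
        continuousOn_const.mul (cg.comp (by fun_prop) hm)
      have := intervalIntegral.integral_eq_sub_of_hasDerivAt_of_le hx.le c1
        (f' := fun x => 2 * (μ * (It t x μ * Dx (t, x, μ))))
        (by
          intro x hxx
          have := (EnergyAux.sq_deriv (hdx x hxx μ hμ)).const_mul μ
          rwa [mul_left_comm] at this)
        (ContinuousOn.intervalIntegrable (by rwa [Set.uIcc_of_le hx.le]))
      simp only
      rw [← this]
      exact (intervalIntegral.integral_const_mul _ _).symm
    all_goals
      apply ContinuousOn.intervalIntegrable
      rw [Set.uIcc_of_le (by norm_num)]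
      refine continuousOn_id.mul (ContinuousOn.pow ?_ 2)
    · exact cI.comp (f := fun μ : ℝ => (xR, μ)) (by fun_prop) (fun μ hμ => ⟨⟨hx.le, le_rfl⟩, hμ⟩)
    · exact cI.comp (f := fun μ : ℝ => (xL, μ)) (by fun_prop) (fun μ hμ => ⟨⟨le_rfl, hx.le⟩, hμ⟩)
  rw [EnergyAux.angular (h := fun μ => It t xR μ ^ 2) ((cI.comp (f := fun μ : ℝ => (xR, μ))
      (by fun_prop) (fun μ hμ => ⟨⟨hx.le, le_rfl⟩, hμ⟩)).pow 2),
    EnergyAux.angular (h := fun μ => It t xL μ ^ 2) ((cI.comp (f := fun μ : ℝ => (xL, μ))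
      (by fun_prop) (fun μ hμ => ⟨⟨le_rfl, hx.le⟩, hμ⟩)).pow 2)] at htrans
  have k1 := cI.mul cDt
  have k2 := cσ.mul (cI.pow 2)
  have k3 := cμ.mul (cI.mul cDx)
  have k4 := cr3.mul cI
  have k5 := (cσ.mul ((cT.pow 4).sub (cTs.pow 4))).mul cI
  have k6 := cr1.mul cI
  have k7 := cr2.mul cI
  have hmain : (∫ p in S, ((((ε ^ 2 / c) * (It t p.1 p.2 * Dt (t, p.1, p.2))
      + σ t p.1 * It t p.1 p.2 ^ 2) + ε * (p.2 * (It t p.1 p.2 * Dx (t, p.1, p.2))))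
      + (1 / 2) * (r3 t p.1 * It t p.1 p.2))
      - (a * c / 2) * (σ t p.1 * (T t p.1 ^ 4 - Tstar t p.1 ^ 4) * It t p.1 p.2))
      = ∫ p in S, (ε ^ 2 * (r1 t p.1 * It t p.1 p.2)
        + (ε / Real.sqrt σ₀) * (r2 t p.1 p.2 * It t p.1 p.2)) := by
    apply setIntegral_congr_fun hSm
    intro p hp
    have h := heq t ht p.1 hp.1 p.2 hp.2
    rw [(hdt t ht p (hSR hp)).deriv,
      (hdx p.1 hp.1 p.2 (Set.Ioo_subset_Icc_self hp.2)).deriv] at h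
    simp only
    linear_combination (It t p.1 p.2) * h
  replace hmain := EnergyAux.lin
    (f1 := fun p => It t p.1 p.2 * Dt (t, p.1, p.2))
    (f2 := fun p => σ t p.1 * It t p.1 p.2 ^ 2)
    (f3 := fun p => p.2 * (It t p.1 p.2 * Dx (t, p.1, p.2)))
    (f4 := fun p => r3 t p.1 * It t p.1 p.2)
    (f5 := fun p => σ t p.1 * (T t p.1 ^ 4 - Tstar t p.1 ^ 4) * It t p.1 p.2)
    (f6 := fun p => r1 t p.1 * It t p.1 p.2)
    (f7 := fun p => r2 t p.1 p.2 * It t p.1 p.2)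
    (ε ^ 2 / c) ε (1 / 2) (a * c / 2) (ε ^ 2) (ε / Real.sqrt σ₀)
    (EnergyAux.integrableOn_box k1) (EnergyAux.integrableOn_box k2)
    (EnergyAux.integrableOn_box k3) (EnergyAux.integrableOn_box k4)
    (EnergyAux.integrableOn_box k5) (EnergyAux.integrableOn_box k6)
    (EnergyAux.integrableOn_box k7) hmain
  rw [hderiv, EnergyAux.integral_box hx (g := fun x μ => σ t x * It t x μ ^ 2) k2,
    EnergyAux.integral_box hx (g := fun x μ => r3 t x * It t x μ) k4,
    EnergyAux.integral_box hx
      (g := fun x μ => σ t x * (T t x ^ 4 - Tstar t x ^ 4) * It t x μ) k5,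
    EnergyAux.integral_box hx (g := fun x μ => r1 t x * It t x μ) k6,
    EnergyAux.integral_box hx (g := fun x μ => r2 t x μ * It t x μ) k7]
  have hcc : ε ^ 2 / (2 * c) * 2 = ε ^ 2 / c := by field_simp
  rw [← mul_assoc, hcc]
  linear_combination hmain - (ε / 2) * htrans
end

section
/- In the setting of the energy identity for Ĩ (i.e., (ε²/c)∂_t Ĩ + σ Ĩ + ε μ ∂_x Ĩ + (1/2)r₃ − (σ a c/2)(T⁴ − T*⁴) = ε² r₁ + (ε/√σ₀) r₂ pointwise, with Ĩ continuously differentiable), assume in addition 0 < σ_min ≤ σ(t,x) ≤ σ_max, 0 < T_min ≤ T(t,x), T*(t,x) ≤ T_max for all (t,x), set T̃ = T − T*, and suppose the inflow boundary values satisfy Ĩ(t,x_L,μ) = r₅ᴸ(t,μ) for μ ∈ (0,1) and Ĩ(t,x_R,μ) = r₅ᴿ(t,μ) for μ ∈ (−1,0). Then for every α₁ > 0 and every t ∈ (0,t_f): (ε²/(2c))·(d/dt)‖Ĩ(t)‖² + σ_min·‖Ĩ(t)‖² ≤ 4α₁·‖Ĩ(t)‖² + (ε⁴/(2α₁))·‖r₁(t)‖²_x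 + (ε²/(4α₁σ₀))·‖r₂(t)‖² + (1/(8α₁))·‖r₃(t)‖²_x + (2(a c σ_max T_max³)²/α₁)·‖T̃(t)‖²_x + (ε/2)·( ∫_0^1 r₅ᴸ(t,μ)² dμ + ∫_{−1}^0 r₅ᴿ(t,μ)² dμ ), where ‖·‖ denotes the L² norm over (x_L,x_R) × (−1,1) and ‖·‖_x the L² norm over (x_L,x_R). -/
open MeasureTheory

lemma aux_int_Q {xL xR : ℝ} (g : ℝ × ℝ → ℝ)
    (hg : ContinuousOn g (Set.Icc xL xR ×ˢ Set.Icc (-1 : ℝ) 1)) :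
    IntegrableOn g (Set.Ioo xL xR ×ˢ Set.Ioo (-1 : ℝ) 1) :=
  (hg.integrableOn_compact (isCompact_Icc.prod isCompact_Icc)).mono_set
    (Set.prod_mono Set.Ioo_subset_Icc_self Set.Ioo_subset_Icc_self)

lemma aux_fubini {xL xR : ℝ} (hx : xL < xR) (g : ℝ × ℝ → ℝ)
    (hg : ContinuousOn g (Set.Icc xL xR ×ˢ Set.Icc (-1 : ℝ) 1)) :
    ∫ x in xL..xR, ∫ μ in (-1 : ℝ)..1, g (x, μ)
      = ∫ p in Set.Ioo xL xR ×ˢ Set.Ioo (-1 : ℝ) 1, g p := by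
  have h := aux_int_Q g hg
  rw [Measure.volume_eq_prod] at h ⊢
  rw [setIntegral_prod _ h, intervalIntegral.integral_of_le hx.le, integral_Ioc_eq_integral_Ioo]
  congr 1
  ext x
  rw [intervalIntegral.integral_of_le (by norm_num), integral_Ioc_eq_integral_Ioo]

lemma aux_fubini_symm {xL xR : ℝ} (hx : xL < xR) (g : ℝ × ℝ → ℝ)
    (hg : ContinuousOn g (Set.Icc xL xR ×ˢ Set.Icc (-1 : ℝ) 1)) :
    ∫ μ in (-1 : ℝ)..1, ∫ x in xL..xR, g (x, μ)
      = ∫ p in Set.Ioo xL xR ×ˢ Set.Ioo (-1 : ℝ) 1, g p := by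
  have h := aux_int_Q g hg
  rw [Measure.volume_eq_prod] at h ⊢
  rw [IntegrableOn, ← Measure.prod_restrict] at h
  rw [← Measure.prod_restrict, integral_prod_symm _ h,
    intervalIntegral.integral_of_le (by norm_num), integral_Ioc_eq_integral_Ioo]
  congr 1
  ext x
  rw [intervalIntegral.integral_of_le hx.le, integral_Ioc_eq_integral_Ioo]

lemma aux_slice {tf t : ℝ} (ht : t ∈ Set.Icc 0 tf) {xL xR : ℝ} (f : ℝ × ℝ × ℝ → ℝ)
    (hf : ContinuousOn f (Set.Icc 0 tf ×ˢ (Set.Icc xL xR ×ˢ Set.Icc (-1 : ℝ) 1))) :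
    ContinuousOn (fun p : ℝ × ℝ => f (t, p)) (Set.Icc xL xR ×ˢ Set.Icc (-1 : ℝ) 1) :=
  hf.comp (by fun_prop) (fun p hp => ⟨ht, hp⟩)

lemma aux_slice2 {tf t : ℝ} (ht : t ∈ Set.Icc 0 tf) {xL xR : ℝ} (f : ℝ × ℝ → ℝ)
    (hf : ContinuousOn f (Set.Icc 0 tf ×ˢ Set.Icc xL xR)) :
    ContinuousOn (fun p : ℝ × ℝ => f (t, p.1)) (Set.Icc xL xR ×ˢ Set.Icc (-1 : ℝ) 1) :=
  hf.comp (by fun_prop) (fun p hp => ⟨ht, hp.1⟩)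

lemma aux_deriv {tf t : ℝ} (ht : t ∈ Set.Ioo 0 tf) {xL xR : ℝ} (f f' : ℝ × ℝ × ℝ → ℝ)
    (hf : ContinuousOn f (Set.Icc 0 tf ×ˢ (Set.Icc xL xR ×ˢ Set.Icc (-1 : ℝ) 1)))
    (hf' : ContinuousOn f' (Set.Icc 0 tf ×ˢ (Set.Icc xL xR ×ˢ Set.Icc (-1 : ℝ) 1)))
    (hd : ∀ s ∈ Set.Ioo 0 tf, ∀ q ∈ Set.Icc xL xR ×ˢ Set.Icc (-1 : ℝ) 1,
      HasDerivAt (fun s => f (s, q)) (f' (s, q)) s) :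
    HasDerivAt (fun s => ∫ q in Set.Ioo xL xR ×ˢ Set.Ioo (-1 : ℝ) 1, f (s, q))
      (∫ q in Set.Ioo xL xR ×ˢ Set.Ioo (-1 : ℝ) 1, f' (t, q)) t := by
  obtain ⟨C, hC⟩ := (isCompact_Icc.prod (isCompact_Icc.prod isCompact_Icc)).exists_bound_of_continuousOn hf'
  have hsub : Set.Ioo xL xR ×ˢ Set.Ioo (-1 : ℝ) 1 ⊆ Set.Icc xL xR ×ˢ Set.Icc (-1 : ℝ) 1 :=
    Set.prod_mono Set.Ioo_subset_Icc_self Set.Ioo_subset_Icc_self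
  have hm : MeasurableSet (Set.Ioo xL xR ×ˢ Set.Ioo (-1 : ℝ) 1) :=
    measurableSet_Ioo.prod measurableSet_Ioo
  refine (hasDerivAt_integral_of_dominated_loc_of_deriv_le
    (F := fun s q => f (s, q)) (F' := fun s q => f' (s, q)) (bound := fun _ => C)
    (Ioo_mem_nhds ht.1 ht.2) ?_ ?_ ?_ ?_ ?_ ?_).2
  · filter_upwards [Ioo_mem_nhds ht.1 ht.2] with s hs
    exact (aux_int_Q _ (aux_slice ⟨hs.1.le, hs.2.le⟩ f hf)).aestronglyMeasurable
  · exact aux_int_Q _ (aux_slice ⟨ht.1.le, ht.2.le⟩ f hf)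
  · exact (aux_int_Q _ (aux_slice ⟨ht.1.le, ht.2.le⟩ f' hf')).aestronglyMeasurable
  · refine (ae_restrict_mem hm).mono fun q hq s hs => ?_
    exact hC (s, q) ⟨⟨hs.1.le, hs.2.le⟩, hsub hq⟩
  · exact aux_int_Q (fun _ => C) continuousOn_const
  · refine (ae_restrict_mem hm).mono fun q hq s hs => ?_
    exact hd s hs q (hsub hq)

lemma aux_young (α u v : ℝ) (hα : 0 < α) : u * v ≤ α * v ^ 2 + u ^ 2 / (4 * α) := by
  have : α * v ^ 2 + u ^ 2 / (4 * α) - u * v = (2 * α * v - u) ^ 2 / (4 * α) := by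
    field_simp; ring
  have h2 : 0 ≤ (2 * α * v - u) ^ 2 / (4 * α) := by positivity
  linarith

lemma aux_quartic (m M x y : ℝ) (hm : 0 < m) (h1 : m ≤ x) (h2 : x ≤ M) (h3 : m ≤ y) (h4 : y ≤ M) :
    (x ^ 4 - y ^ 4) ^ 2 ≤ (4 * M ^ 3) ^ 2 * (x - y) ^ 2 := by
  have hx : 0 < x := by linarith
  have hy : 0 < y := by linarith
  have hM : 0 < M := by linarith
  have e : x ^ 4 - y ^ 4 = (x ^ 3 + x ^ 2 * y + x * y ^ 2 + y ^ 3) * (x - y) := by ring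
  have b : x ^ 3 + x ^ 2 * y + x * y ^ 2 + y ^ 3 ≤ 4 * M ^ 3 := by
    calc _ ≤ M ^ 3 + M ^ 2 * M + M * M ^ 2 + M ^ 3 := by gcongr
      _ = _ := by ring
  rw [e, mul_pow]
  gcongr

lemma aux_pt (a c ε σ₀ σmin σmax Tmin Tmax α s T S r1 r3 r2 I It Ix μ : ℝ)
    (ha : 0 < a) (hc : 0 < c) (hσ₀ : 0 < σ₀) (hσmin : 0 < σmin) (hTmin : 0 < Tmin)
    (hα : 0 < α) (hs : σmin ≤ s ∧ s ≤ σmax)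
    (hT : Tmin ≤ T ∧ T ≤ Tmax ∧ Tmin ≤ S ∧ S ≤ Tmax)
    (heq : (ε ^ 2 / c) * It + s * I + ε * μ * Ix + (1 / 2) * r3
          - (s * a * c / 2) * (T ^ 4 - S ^ 4) = ε ^ 2 * r1 + (ε / Real.sqrt σ₀) * r2) :
    (ε ^ 2 / (2 * c)) * (2 * I * It) + σmin * I ^ 2 + (ε / 2) * (μ * (2 * I * Ix))
      ≤ 4 * α * I ^ 2 + (ε ^ 4 / (4 * α)) * r1 ^ 2 + (ε ^ 2 / (4 * α * σ₀)) * r2 ^ 2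
        + (1 / (16 * α)) * r3 ^ 2
        + ((a * c * σmax * Tmax ^ 3) ^ 2 / α) * (T - S) ^ 2 := by
  have y1 := aux_young α (ε ^ 2 * r1) I hα
  have y2 := aux_young α ((ε / Real.sqrt σ₀) * r2) I hα
  have y3 := aux_young α (-(1 / 2) * r3) I hα
  have y4 := aux_young α ((s * a * c / 2) * (T ^ 4 - S ^ 4)) I hα
  have q := aux_quartic Tmin Tmax T S hTmin hT.1 hT.2.1 hT.2.2.1 hT.2.2.2
  have hs0 : 0 < s := by linarith
  have hsI : σmin * I ^ 2 ≤ s * I ^ 2 := by gcongr; exact hs.1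
  have q2 : ((s * a * c / 2) * (T ^ 4 - S ^ 4)) ^ 2 / (4 * α)
      ≤ ((a * c * σmax * Tmax ^ 3) ^ 2 / α) * (T - S) ^ 2 := by
    calc ((s * a * c / 2) * (T ^ 4 - S ^ 4)) ^ 2 / (4 * α)
        = (s * a * c / 2) ^ 2 * (T ^ 4 - S ^ 4) ^ 2 / (4 * α) := by rw [mul_pow]
      _ ≤ (σmax * a * c / 2) ^ 2 * ((4 * Tmax ^ 3) ^ 2 * (T - S) ^ 2) / (4 * α) := by
        gcongr; exact hs.2
      _ = _ := by field_simp; ring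
  have e2 : ((ε / Real.sqrt σ₀) * r2) ^ 2 / (4 * α) = (ε ^ 2 / (4 * α * σ₀)) * r2 ^ 2 := by
    rw [mul_pow, div_pow, Real.sq_sqrt hσ₀.le]; field_simp
  have e1 : (ε ^ 2 * r1) ^ 2 / (4 * α) = (ε ^ 4 / (4 * α)) * r1 ^ 2 := by field_simp
  have e3 : (-(1 / 2) * r3) ^ 2 / (4 * α) = (1 / (16 * α)) * r3 ^ 2 := by field_simp; ring
  have e0 : (ε ^ 2 / (2 * c)) * (2 * I * It) = (ε ^ 2 / c) * It * I := by field_simp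
  have hm := congrArg (· * I) heq
  beta_reduce at hm
  rw [e2] at y2; rw [e1] at y1; rw [e3] at y3; rw [e0]
  nlinarith [hm, y1, y2, y3, y4, q2, hsI]

lemma aux_x_only {xL xR : ℝ} (hx : xL < xR) (g : ℝ → ℝ)
    (hg : ContinuousOn (fun p : ℝ × ℝ => g p.1) (Set.Icc xL xR ×ˢ Set.Icc (-1 : ℝ) 1)) :
    ∫ p in Set.Ioo xL xR ×ˢ Set.Ioo (-1 : ℝ) 1, g p.1 = 2 * ∫ x in xL..xR, g x := by
  rw [← aux_fubini hx _ hg, ← intervalIntegral.integral_const_mul]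
  congr 1
  ext x
  simp
  norm_num

lemma aux_bdry (A B l r : ℝ → ℝ)
    (hA : ContinuousOn A (Set.Icc (-1) 1)) (hB : ContinuousOn B (Set.Icc (-1) 1))
    (hl : ∀ μ ∈ Set.Ioo (0 : ℝ) 1, A μ = l μ) (hr : ∀ μ ∈ Set.Ioo (-1 : ℝ) 0, B μ = r μ) :
    -((∫ μ in (0 : ℝ)..1, (l μ) ^ 2) + ∫ μ in (-1 : ℝ)..0, (r μ) ^ 2)
      ≤ ∫ μ in (-1 : ℝ)..1, μ * (B μ ^ 2 - A μ ^ 2) := by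
  have s1 : Set.Icc (0 : ℝ) 1 ⊆ Set.Icc (-1) 1 := Set.Icc_subset_Icc (by norm_num) le_rfl
  have s2 : Set.Icc (-1 : ℝ) 0 ⊆ Set.Icc (-1) 1 := Set.Icc_subset_Icc le_rfl (by norm_num)
  have hc : ContinuousOn (fun μ : ℝ => μ * (B μ ^ 2 - A μ ^ 2)) (Set.Icc (-1) 1) := by fun_prop
  have i1 := (hc.mono s1).intervalIntegrable_of_Icc (μ := volume) (by norm_num)
  have i2 := (hc.mono s2).intervalIntegrable_of_Icc (μ := volume) (by norm_num)
  have j1 := (((hA.pow 2).neg).mono s1).intervalIntegrable_of_Icc (μ := volume) (by norm_num)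
  have j2 := (((hB.pow 2).neg).mono s2).intervalIntegrable_of_Icc (μ := volume) (by norm_num)
  have e1 : ∫ μ in (0 : ℝ)..1, (l μ) ^ 2 = ∫ μ in (0 : ℝ)..1, (A μ) ^ 2 := by
    rw [intervalIntegral.integral_of_le (by norm_num), intervalIntegral.integral_of_le (by norm_num),
      integral_Ioc_eq_integral_Ioo, integral_Ioc_eq_integral_Ioo]
    exact setIntegral_congr_fun measurableSet_Ioo (fun μ hμ => by simp only [hl μ hμ])
  have e2 : ∫ μ in (-1 : ℝ)..0, (r μ) ^ 2 = ∫ μ in (-1 : ℝ)..0, (B μ) ^ 2 := by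
    rw [intervalIntegral.integral_of_le (by norm_num), intervalIntegral.integral_of_le (by norm_num),
      integral_Ioc_eq_integral_Ioo, integral_Ioc_eq_integral_Ioo]
    exact setIntegral_congr_fun measurableSet_Ioo (fun μ hμ => by simp only [hr μ hμ])
  rw [← intervalIntegral.integral_add_adjacent_intervals i2 i1, e1, e2, neg_add,
    ← intervalIntegral.integral_neg, ← intervalIntegral.integral_neg, add_comm]
  refine add_le_add ?_ ?_
  · refine intervalIntegral.integral_mono_on (by norm_num) j2 i2 fun μ hμ => ?_
    nlinarith [sq_nonneg (A μ), sq_nonneg (B μ), hμ.1, hμ.2,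
      mul_nonneg (neg_nonneg.2 hμ.2) (sq_nonneg (A μ)),
      mul_nonneg (by linarith [hμ.1] : 0 ≤ 1 + μ) (sq_nonneg (B μ))]
  · refine intervalIntegral.integral_mono_on (by norm_num) j1 i1 fun μ hμ => ?_
    nlinarith [mul_nonneg hμ.1 (sq_nonneg (B μ)),
      mul_nonneg (sub_nonneg.2 hμ.2) (sq_nonneg (A μ))]

/-- The differential energy inequality for the intensity error `Ĩ` in the convergence
analysis: it follows from the energy identity by dropping the nonnegative outflow
boundary terms, bounding the inflow boundary terms, using the quartic factorization
bound, the opacity bounds, and Young's inequality with parameter `α₁ > 0`. -/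
theorem energy_inequality_for_intensity_error
    (a c ε σ₀ : ℝ) (ha : 0 < a) (hc : 0 < c) (hε : 0 < ε) (hσ₀ : 0 < σ₀)
    (xL xR : ℝ) (hx : xL < xR) (tf : ℝ) (htf : 0 < tf)
    (σmin σmax Tmin Tmax : ℝ) (hσmin : 0 < σmin) (hTmin : 0 < Tmin)
    (σ T Tstar r1 r3 : ℝ → ℝ → ℝ) (r2 It : ℝ → ℝ → ℝ → ℝ) (r5L r5R : ℝ → ℝ → ℝ)
    (hσ : ContinuousOn (fun p : ℝ × ℝ => σ p.1 p.2)
      (Set.Icc (0 : ℝ) tf ×ˢ Set.Icc xL xR))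
    (hT : ContinuousOn (fun p : ℝ × ℝ => T p.1 p.2)
      (Set.Icc (0 : ℝ) tf ×ˢ Set.Icc xL xR))
    (hTstar : ContinuousOn (fun p : ℝ × ℝ => Tstar p.1 p.2)
      (Set.Icc (0 : ℝ) tf ×ˢ Set.Icc xL xR))
    (hr1 : ContinuousOn (fun p : ℝ × ℝ => r1 p.1 p.2)
      (Set.Icc (0 : ℝ) tf ×ˢ Set.Icc xL xR))
    (hr3 : ContinuousOn (fun p : ℝ × ℝ => r3 p.1 p.2)
      (Set.Icc (0 : ℝ) tf ×ˢ Set.Icc xL xR))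
    (hr2 : ContinuousOn (fun p : ℝ × ℝ × ℝ => r2 p.1 p.2.1 p.2.2)
      (Set.Icc (0 : ℝ) tf ×ˢ (Set.Icc xL xR ×ˢ Set.Icc (-1 : ℝ) 1)))
    (hIt : ContDiffOn ℝ 1 (fun p : ℝ × ℝ × ℝ => It p.1 p.2.1 p.2.2)
      (Set.Icc (0 : ℝ) tf ×ˢ (Set.Icc xL xR ×ˢ Set.Icc (-1 : ℝ) 1)))
    (heq : ∀ t ∈ Set.Ioo (0 : ℝ) tf, ∀ x ∈ Set.Ioo xL xR, ∀ μ ∈ Set.Ioo (-1 : ℝ) 1,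
      (ε ^ 2 / c) * deriv (fun s => It s x μ) t + σ t x * It t x μ
          + ε * μ * deriv (fun y => It t y μ) x + (1 / 2) * r3 t x
          - (σ t x * a * c / 2) * ((T t x) ^ 4 - (Tstar t x) ^ 4)
        = ε ^ 2 * r1 t x + (ε / Real.sqrt σ₀) * r2 t x μ)
    (hσbd : ∀ t ∈ Set.Icc (0 : ℝ) tf, ∀ x ∈ Set.Icc xL xR,
      σmin ≤ σ t x ∧ σ t x ≤ σmax)
    (hTbd : ∀ t ∈ Set.Icc (0 : ℝ) tf, ∀ x ∈ Set.Icc xL xR,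
      Tmin ≤ T t x ∧ T t x ≤ Tmax ∧ Tmin ≤ Tstar t x ∧ Tstar t x ≤ Tmax)
    (hbL : ∀ t ∈ Set.Ioo (0 : ℝ) tf, ∀ μ ∈ Set.Ioo (0 : ℝ) 1, It t xL μ = r5L t μ)
    (hbR : ∀ t ∈ Set.Ioo (0 : ℝ) tf, ∀ μ ∈ Set.Ioo (-1 : ℝ) 0, It t xR μ = r5R t μ) :
    ∀ α₁ > (0 : ℝ), ∀ t ∈ Set.Ioo (0 : ℝ) tf,
      (ε ^ 2 / (2 * c)) *
          deriv (fun s => ∫ x in xL..xR, ∫ μ in (-1 : ℝ)..1, (It s x μ) ^ 2) t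
        + σmin * (∫ x in xL..xR, ∫ μ in (-1 : ℝ)..1, (It t x μ) ^ 2)
      ≤ 4 * α₁ * (∫ x in xL..xR, ∫ μ in (-1 : ℝ)..1, (It t x μ) ^ 2)
        + (ε ^ 4 / (2 * α₁)) * (∫ x in xL..xR, (r1 t x) ^ 2)
        + (ε ^ 2 / (4 * α₁ * σ₀)) * (∫ x in xL..xR, ∫ μ in (-1 : ℝ)..1, (r2 t x μ) ^ 2)
        + (1 / (8 * α₁)) * (∫ x in xL..xR, (r3 t x) ^ 2)
        + (2 * (a * c * σmax * Tmax ^ 3) ^ 2 / α₁) *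
            (∫ x in xL..xR, (T t x - Tstar t x) ^ 2)
        + (ε / 2) * ((∫ μ in (0 : ℝ)..1, (r5L t μ) ^ 2)
            + (∫ μ in (-1 : ℝ)..0, (r5R t μ) ^ 2)) := by
  intro α hα t ht
  have htc : t ∈ Set.Icc 0 tf := ⟨ht.1.le, ht.2.le⟩
  set K : Set (ℝ × ℝ × ℝ) := Set.Icc (0 : ℝ) tf ×ˢ (Set.Icc xL xR ×ˢ Set.Icc (-1 : ℝ) 1) with hK
  set G : ℝ × ℝ × ℝ → ℝ := fun p => It p.1 p.2.1 p.2.2 with hG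
  have hU : UniqueDiffOn ℝ K := (uniqueDiffOn_Icc htf).prod
    ((uniqueDiffOn_Icc hx).prod (uniqueDiffOn_Icc (by norm_num)))
  have hD : ContinuousOn (fderivWithin ℝ G K) K := hIt.continuousOn_fderivWithin hU le_rfl
  have hGc : ContinuousOn G K := hIt.continuousOn
  have hdiff : ∀ p ∈ K, HasFDerivWithinAt G (fderivWithin ℝ G K p) K p := fun p hp =>
    ((hIt.differentiableOn (by norm_num)) p hp).hasFDerivWithinAt
  set Gt : ℝ × ℝ × ℝ → ℝ := fun p => fderivWithin ℝ G K p (1, 0, 0) with hGt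
  set Gx : ℝ × ℝ × ℝ → ℝ := fun p => fderivWithin ℝ G K p (0, 1, 0) with hGx
  have hGtc : ContinuousOn Gt K := hD.clm_apply continuousOn_const
  have hGxc : ContinuousOn Gx K := hD.clm_apply continuousOn_const
  have hdt : ∀ s ∈ Set.Ioo 0 tf, ∀ q ∈ Set.Icc xL xR ×ˢ Set.Icc (-1 : ℝ) 1,
      HasDerivAt (fun s => G (s, q)) (Gt (s, q)) s := by
    intro s hs q hq
    have h1 : HasDerivWithinAt (fun s : ℝ => (s, q)) ((1 : ℝ), (0 : ℝ × ℝ)) (Set.Icc 0 tf) s :=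
      ((hasDerivAt_id s).prodMk (hasDerivAt_const s q)).hasDerivWithinAt
    have hmt : Set.MapsTo (fun s : ℝ => (s, q)) (Set.Icc 0 tf) K := fun u hu => ⟨hu, hq⟩
    have h2 := (hdiff (s, q) ⟨⟨hs.1.le, hs.2.le⟩, hq⟩).comp_hasDerivWithinAt s h1
      hmt
    exact h2.hasDerivAt (Icc_mem_nhds hs.1 hs.2)
  have hdx : ∀ x ∈ Set.Ioo xL xR, ∀ μ ∈ Set.Icc (-1 : ℝ) 1,
      HasDerivAt (fun y => G (t, y, μ)) (Gx (t, x, μ)) x := by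
    intro x hx' μ hμ
    have h1 : HasDerivWithinAt (fun y : ℝ => (t, y, μ)) ((0 : ℝ), (1 : ℝ), (0 : ℝ))
        (Set.Icc xL xR) x :=
      ((hasDerivAt_const x t).prodMk
        ((hasDerivAt_id x).prodMk (hasDerivAt_const x μ))).hasDerivWithinAt
    have hmt : Set.MapsTo (fun y : ℝ => (t, y, μ)) (Set.Icc xL xR) K :=
      fun u hu => ⟨htc, hu, hμ⟩
    have h2 := (hdiff (t, x, μ) ⟨htc, ⟨hx'.1.le, hx'.2.le⟩, hμ⟩).comp_hasDerivWithinAt x h1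
      hmt
    exact h2.hasDerivAt (Icc_mem_nhds hx'.1 hx'.2)
  set Q : Set (ℝ × ℝ) := Set.Ioo xL xR ×ˢ Set.Ioo (-1 : ℝ) 1 with hQ
  -- slices
  have cI := aux_slice htc G hGc
  have cIt := aux_slice htc Gt hGtc
  have cIx := aux_slice htc Gx hGxc
  have cr2 := aux_slice htc _ hr2
  have cr1 := aux_slice2 htc _ hr1
  have cr3 := aux_slice2 htc _ hr3
  have cT := aux_slice2 htc _ hT
  have cS := aux_slice2 htc _ hTstar
  simp only at cr2 cr1 cr3 cT cS
  have hE : ∀ s ∈ Set.Icc 0 tf, ∫ x in xL..xR, ∫ μ in (-1 : ℝ)..1, (It s x μ) ^ 2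
      = ∫ q in Q, G (s, q) ^ 2 := fun s hs =>
    aux_fubini hx (fun q => G (s, q) ^ 2) ((aux_slice hs G hGc).pow 2)
  have hder : deriv (fun s => ∫ x in xL..xR, ∫ μ in (-1 : ℝ)..1, (It s x μ) ^ 2) t
      = ∫ q in Q, 2 * G (t, q) * Gt (t, q) := by
    have h := aux_deriv ht (fun p => G p ^ 2) (fun p => 2 * G p * Gt p) (hGc.pow 2)
      ((continuousOn_const.mul hGc).mul hGtc)
      (fun s hs q hq => by
        have h := (hdt s hs q hq).fun_pow 2
        simp only [Nat.cast_ofNat, Nat.add_one_sub_one, pow_one] at h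
        exact h)
    refine (h.congr_of_eventuallyEq ?_).deriv
    filter_upwards [Ioo_mem_nhds ht.1 ht.2] with s hs
    exact hE s ⟨hs.1.le, hs.2.le⟩
  have hR2 : ∫ x in xL..xR, ∫ μ in (-1 : ℝ)..1, (r2 t x μ) ^ 2
      = ∫ q in Q, r2 t q.1 q.2 ^ 2 :=
    aux_fubini hx (fun q => r2 t q.1 q.2 ^ 2) (cr2.pow 2)
  have hR1 := aux_x_only hx (fun x => r1 t x ^ 2) (cr1.pow 2)
  have hR3 := aux_x_only hx (fun x => r3 t x ^ 2) (cr3.pow 2)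
  have hTT := aux_x_only hx (fun x => (T t x - Tstar t x) ^ 2) ((cT.sub cS).pow 2)
  have cB : ContinuousOn (fun q : ℝ × ℝ => q.2 * (2 * G (t, q) * Gx (t, q)))
      (Set.Icc xL xR ×ˢ Set.Icc (-1 : ℝ) 1) :=
    continuousOn_snd.mul ((continuousOn_const.mul cI).mul cIx)
  have hB : ∫ q in Q, q.2 * (2 * G (t, q) * Gx (t, q))
      = ∫ μ in (-1 : ℝ)..1, μ * ((It t xR μ) ^ 2 - (It t xL μ) ^ 2) := by
    rw [← aux_fubini_symm hx _ cB]
    refine intervalIntegral.integral_congr fun μ hμ => ?_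
    rw [Set.uIcc_of_le (by norm_num)] at hμ
    have cm : ContinuousOn (fun x : ℝ => (x, μ)) (Set.Icc xL xR) := by fun_prop
    have hmaps : Set.MapsTo (fun x : ℝ => (x, μ)) (Set.Icc xL xR)
      (Set.Icc xL xR ×ˢ Set.Icc (-1 : ℝ) 1) := fun x hx => ⟨hx, hμ⟩
    have := intervalIntegral.integral_eq_sub_of_hasDerivAt_of_le hx.le
      (f := fun x => μ * G (t, x, μ) ^ 2) (f' := fun x => μ * (2 * G (t, x, μ) * Gx (t, x, μ)))
      (continuousOn_const.mul ((cI.comp cm hmaps).pow 2))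
      (fun x hx' => by
        have h := ((hdx x hx' μ hμ).fun_pow 2).const_mul μ
        simp only [Nat.cast_ofNat, Nat.add_one_sub_one, pow_one] at h
        exact h)
      ((cB.comp cm hmaps).intervalIntegrable_of_Icc hx.le)
    exact this.trans (mul_sub _ _ _).symm
  have hbd := aux_bdry (fun μ => It t xL μ) (fun μ => It t xR μ) (r5L t) (r5R t)
    (cI.comp (f := fun μ : ℝ => (xL, μ)) (by fun_prop) (fun μ hμ => ⟨⟨le_rfl, hx.le⟩, hμ⟩))
    (cI.comp (f := fun μ : ℝ => (xR, μ)) (by fun_prop) (fun μ hμ => ⟨⟨hx.le, le_rfl⟩, hμ⟩))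
    (hbL t ht) (hbR t ht)
  rw [← hB] at hbd
  have i1 := aux_int_Q _ ((continuousOn_const (c := (2 : ℝ)).mul cI).mul cIt)
  have i2 := aux_int_Q _ (cI.pow 2)
  have i3 := aux_int_Q _ cB
  have i4 := aux_int_Q _ (cr1.pow 2)
  have i5 := aux_int_Q _ (cr2.pow 2)
  have i6 := aux_int_Q _ (cr3.pow 2)
  have i7 := aux_int_Q _ ((cT.sub cS).pow 2)
  have k1 := i1.const_mul (ε ^ 2 / (2 * c))
  have k2 := i2.const_mul σmin
  have k3 := i3.const_mul (ε / 2)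
  have k0 := i2.const_mul (4 * α)
  have k4 := i4.const_mul (ε ^ 4 / (4 * α))
  have k5 := i5.const_mul (ε ^ 2 / (4 * α * σ₀))
  have k6 := i6.const_mul (1 / (16 * α))
  have k7 := i7.const_mul ((a * c * σmax * Tmax ^ 3) ^ 2 / α)
  have key := setIntegral_mono_on ((k1.add k2).add k3) ((((k0.add k4).add k5).add k6).add k7)
    (measurableSet_Ioo.prod measurableSet_Ioo) (by
      rintro ⟨x, μ⟩ ⟨hx', hμ⟩
      have hxc : x ∈ Set.Icc xL xR := ⟨hx'.1.le, hx'.2.le⟩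
      have hμc : μ ∈ Set.Icc (-1 : ℝ) 1 := ⟨hμ.1.le, hμ.2.le⟩
      have h := heq t ht x hx' μ hμ
      have d1 : deriv (fun s => It s x μ) t = Gt (t, x, μ) := (hdt t ht (x, μ) ⟨hxc, hμc⟩).deriv
      have d2 : deriv (fun y => It t y μ) x = Gx (t, x, μ) := (hdx x hx' μ hμc).deriv
      rw [d1, d2] at h
      exact aux_pt a c ε σ₀ σmin σmax Tmin Tmax α (σ t x) (T t x) (Tstar t x) (r1 t x) (r3 t x)
        (r2 t x μ) (It t x μ) (Gt (t, x, μ)) (Gx (t, x, μ)) μ ha hc hσ₀ hσmin hTmin hα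
        (hσbd t htc x hxc) (hTbd t htc x hxc) h)
  rw [integral_add' (k1.add k2) k3, integral_add' k1 k2,
    integral_add' (((k0.add k4).add k5).add k6) k7, integral_add' ((k0.add k4).add k5) k6,
    integral_add' (k0.add k4) k5, integral_add' k0 k4] at key
  simp only [integral_const_mul, Pi.pow_apply, Pi.mul_apply, Pi.sub_apply] at key
  rw [hder, hE t htc, hR2]
  rw [hR1, hR3, hTT] at key
  have hbd2 := mul_le_mul_of_nonneg_left hbd (by positivity : 0 ≤ ε / 2)
  have f1 : ∀ z : ℝ, ε ^ 4 / (2 * α) * z = ε ^ 4 / (4 * α) * (2 * z) := fun z => by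
    field_simp; ring
  have f2 : ∀ z : ℝ, 1 / (8 * α) * z = 1 / (16 * α) * (2 * z) := fun z => by
    field_simp; ring
  have f3 : ∀ z : ℝ, 2 * (a * c * σmax * Tmax ^ 3) ^ 2 / α * z
      = (a * c * σmax * Tmax ^ 3) ^ 2 / α * (2 * z) := fun z => by ring
  rw [f1, f2, f3]
  linarith [key, hbd2]
end

section
/- Let a, c, C_v, ε, σ₀ > 0 be constants, x_L < x_R, t_f > 0. Let σ, T, T*, r₃, r₄ : [0,t_f] × [x_L,x_R] → ℝ be continuous with 0 < σ_min ≤ σ ≤ σ_max and 0 < T_min ≤ T, T* ≤ T_max, let T̃ = T − T* be continuously differentiable, let Ĩ : [0,t_f] × [x_L,x_R] × [−1,1] → ℝ be continuous, and set ρ̃(t,x) = ⟨Ĩ(t,x,·)⟩ − (ε/√σ₀)·r₄(t,x). Suppose ε² C_v ∂_t T̃ − 2σ ρ̃ + σ a c (T⁴ − T*⁴) = r₃ pointwise on (0,t_f) × (x_L,x_R). Then for every α₂ > 0 and every t ∈ (0,t_f): (ε² C_v/2)·(d/dt)‖T̃(t)‖²_x + 4 a c σ_min T_min³·‖T̃(t)‖²_x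 ≤ 3α₂·‖T̃(t)‖²_x + (1/(4α₂))·‖r₃(t)‖²_x + (σ_max²/(2α₂))·‖Ĩ(t)‖² + (ε² σ_max²/(α₂ σ₀))·‖r₄(t)‖²_x, where ‖·‖_x denotes the L² norm over (x_L,x_R) and ‖·‖ the L² norm over (x_L,x_R) × (−1,1). -/
open MeasureTheory

lemma avg_sq_le_aux (h : ℝ → ℝ) (hh : ContinuousOn h (Set.Icc (-1 : ℝ) 1)) :
    (avg h) ^ 2 ≤ (1 / 2) * ∫ μ in (-1 : ℝ)..1, (h μ) ^ 2 := by
  have hu : Set.uIcc (-1 : ℝ) 1 = Set.Icc (-1) 1 := Set.uIcc_of_le (by norm_num)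
  have i1 : IntervalIntegrable h volume (-1) 1 :=
    ContinuousOn.intervalIntegrable (by rw [hu]; exact hh)
  have i2 : IntervalIntegrable (fun μ => (h μ) ^ 2) volume (-1) 1 :=
    ContinuousOn.intervalIntegrable (by rw [hu]; exact hh.pow 2)
  set m := avg h with hm
  have h0 : 0 ≤ ∫ μ in (-1 : ℝ)..1, (h μ - m) ^ 2 :=
    intervalIntegral.integral_nonneg (by norm_num) (fun u _ => sq_nonneg _)
  have e : (∫ μ in (-1 : ℝ)..1, (h μ - m) ^ 2)
      = (∫ μ in (-1 : ℝ)..1, (h μ) ^ 2) - 2 * m * (∫ μ in (-1 : ℝ)..1, h μ) + 2 * m ^ 2 := by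
    have : (fun μ => (h μ - m) ^ 2) = fun μ => ((h μ) ^ 2 - (2 * m) * h μ) + m ^ 2 := by
      funext μ; ring
    rw [this, intervalIntegral.integral_add (i2.sub (i1.const_mul _)) (by simp),
      intervalIntegral.integral_sub i2 (i1.const_mul _), intervalIntegral.integral_const_mul]
    rw [intervalIntegral.integral_const, smul_eq_mul]
    ring
  have hm2 : (∫ μ in (-1 : ℝ)..1, h μ) = 2 * m := by rw [hm, avg]; ring
  rw [e, hm2] at h0
  nlinarith

lemma pointwise_aux (a c ε σ₀ σmin σmax Tmin α s T S r r4 A J D e : ℝ)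
    (ha : 0 < a) (hc : 0 < c) (hσ₀ : 0 < σ₀) (hσmin : 0 < σmin) (hTmin : 0 < Tmin)
    (hα : 0 < α) (h1 : σmin ≤ s) (h2 : s ≤ σmax) (hT : Tmin ≤ T) (hS : Tmin ≤ S)
    (hA : A ^ 2 ≤ (1 / 2) * J)
    (heq : e * D - 2 * s * (A - (ε / Real.sqrt σ₀) * r4) + s * a * c * (T ^ 4 - S ^ 4) = r) :
    e * ((T - S) * D) + 4 * a * c * σmin * Tmin ^ 3 * (T - S) ^ 2
      ≤ 3 * α * (T - S) ^ 2 + (1 / (4 * α)) * r ^ 2 + (σmax ^ 2 / (2 * α)) * J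
        + (ε ^ 2 * σmax ^ 2 / (α * σ₀)) * r4 ^ 2 := by
  have hs : 0 < s := by linarith
  have young : ∀ u v : ℝ, u * v ≤ α * v ^ 2 + (1 / (4 * α)) * u ^ 2 := by
    intro u v
    have : α * v ^ 2 + (1 / (4 * α)) * u ^ 2 - u * v = (1 / (4 * α)) * (u - 2 * α * v) ^ 2 := by
      field_simp; ring
    have : 0 ≤ (1 / (4 * α)) * (u - 2 * α * v) ^ 2 := by positivity
    linarith
  have ss : s ^ 2 ≤ σmax ^ 2 := by gcongr
  have y1 := young r (T - S)
  have y2 := young (2 * s * A) (T - S)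
  have y3 := young (-(2 * s * ((ε / Real.sqrt σ₀) * r4))) (T - S)
  have z2 : (1 / (4 * α)) * (2 * s * A) ^ 2 ≤ (σmax ^ 2 / (2 * α)) * J := by
    have : s ^ 2 * A ^ 2 ≤ σmax ^ 2 * ((1 / 2) * J) := by gcongr
    calc (1 / (4 * α)) * (2 * s * A) ^ 2 = (1 / α) * (s ^ 2 * A ^ 2) := by field_simp; ring
      _ ≤ (1 / α) * (σmax ^ 2 * ((1 / 2) * J)) := by gcongr
      _ = _ := by field_simp
  have z3 : (1 / (4 * α)) * (-(2 * s * ((ε / Real.sqrt σ₀) * r4))) ^ 2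
      ≤ (ε ^ 2 * σmax ^ 2 / (α * σ₀)) * r4 ^ 2 := by
    have hq : (ε / Real.sqrt σ₀) ^ 2 = ε ^ 2 / σ₀ := by
      rw [div_pow, Real.sq_sqrt hσ₀.le]
    calc (1 / (4 * α)) * (-(2 * s * ((ε / Real.sqrt σ₀) * r4))) ^ 2
        = (1 / α) * (s ^ 2 * ((ε / Real.sqrt σ₀) ^ 2 * r4 ^ 2)) := by ring
      _ = (1 / α) * (s ^ 2 * ((ε ^ 2 / σ₀) * r4 ^ 2)) := by rw [hq]
      _ ≤ (1 / α) * (σmax ^ 2 * ((ε ^ 2 / σ₀) * r4 ^ 2)) := by gcongr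
      _ = _ := by field_simp
  have quart : 4 * a * c * σmin * Tmin ^ 3 * (T - S) ^ 2
      ≤ s * a * c * (T ^ 4 - S ^ 4) * (T - S) := by
    have hT0 : 0 < T := by linarith
    have hS0 : 0 < S := by linarith
    have k : 4 * Tmin ^ 3 ≤ (T + S) * (T ^ 2 + S ^ 2) := by
      calc 4 * Tmin ^ 3 = (Tmin + Tmin) * (Tmin ^ 2 + Tmin ^ 2) := by ring
        _ ≤ _ := by gcongr
    calc 4 * a * c * σmin * Tmin ^ 3 * (T - S) ^ 2
        = a * c * (σmin * (4 * Tmin ^ 3)) * (T - S) ^ 2 := by ring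
      _ ≤ a * c * (s * ((T + S) * (T ^ 2 + S ^ 2))) * (T - S) ^ 2 := by gcongr
      _ = _ := by ring
  have key : e * ((T - S) * D) = r * (T - S) + 2 * s * A * (T - S)
      + -(2 * s * ((ε / Real.sqrt σ₀) * r4)) * (T - S)
      - s * a * c * (T ^ 4 - S ^ 4) * (T - S) := by
    rw [← heq]; ring
  linarith

lemma deriv_aux (f : ℝ → ℝ → ℝ) (tf xL xR : ℝ) (hx : xL < xR) (htf : 0 < tf)
    (hf : ContDiffOn ℝ 1 (fun p : ℝ × ℝ => f p.1 p.2)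
      (Set.Icc (0 : ℝ) tf ×ˢ Set.Icc xL xR)) (t : ℝ) (ht : t ∈ Set.Ioo (0 : ℝ) tf) :
    ∃ g : ℝ → ℝ, ContinuousOn g (Set.Icc xL xR) ∧
      (∀ x ∈ Set.Icc xL xR, deriv (fun s => f s x) t = g x) ∧
      deriv (fun s => ∫ x in xL..xR, (f s x) ^ 2) t = ∫ x in xL..xR, 2 * (f t x * g x) := by
  set R := Set.Icc (0 : ℝ) tf ×ˢ Set.Icc xL xR with hR
  set F : ℝ × ℝ → ℝ := fun p => f p.1 p.2 with hF
  have hu : UniqueDiffOn ℝ R := (uniqueDiffOn_Icc htf).prod (uniqueDiffOn_Icc hx)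
  have hcd : ContinuousOn (fun p => fderivWithin ℝ F R p ((1 : ℝ), (0 : ℝ))) R :=
    (hf.continuousOn_fderivWithin hu le_rfl).clm_apply continuousOn_const
  have hder : ∀ s ∈ Set.Ioo (0 : ℝ) tf, ∀ x ∈ Set.Icc xL xR,
      HasDerivAt (fun s => f s x) (fderivWithin ℝ F R (s, x) ((1 : ℝ), (0 : ℝ))) s := by
    intro s hs x hxx
    have hmem : (s, x) ∈ R := ⟨Set.Ioo_subset_Icc_self hs, hxx⟩
    have h1 : HasFDerivWithinAt F (fderivWithin ℝ F R (s, x)) R (s, x) :=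
      ((hf.differentiableOn one_ne_zero) _ hmem).hasFDerivWithinAt
    have h2 : HasDerivWithinAt (fun s : ℝ => (s, x)) ((1 : ℝ), (0 : ℝ)) (Set.Icc 0 tf) s :=
      ((hasDerivAt_id s).prodMk (hasDerivAt_const s x)).hasDerivWithinAt
    have h3 : HasDerivWithinAt (F ∘ fun s : ℝ => (s, x))
        (fderivWithin ℝ F R (s, x) ((1 : ℝ), (0 : ℝ))) (Set.Icc 0 tf) s :=
      by
      have hmaps : Set.MapsTo (fun s : ℝ => (s, x)) (Set.Icc 0 tf) R := fun y hy => ⟨hy, hxx⟩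
      exact h1.comp_hasDerivWithinAt s h2 hmaps
    exact h3.hasDerivAt (Icc_mem_nhds hs.1 hs.2)
  have hslice : ∀ s ∈ Set.Icc (0 : ℝ) tf, ∀ G : ℝ × ℝ → ℝ, ContinuousOn G R →
      ContinuousOn (fun x => G (s, x)) (Set.Icc xL xR) := by
    intro s hs G hG
    exact hG.comp (f := fun x : ℝ => (s, x)) (by fun_prop) (fun x hxx => ⟨hs, hxx⟩)
  have hui : Set.uIcc xL xR = Set.Icc xL xR := Set.uIcc_of_le hx.le
  have htI : t ∈ Set.Icc (0 : ℝ) tf := Set.Ioo_subset_Icc_self ht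
  have hP : ContinuousOn
      (fun p => 2 * (F p * fderivWithin ℝ F R p ((1 : ℝ), (0 : ℝ)))) R :=
    continuousOn_const.mul (hf.continuousOn.mul hcd)
  obtain ⟨C, hC⟩ := (isCompact_Icc.prod isCompact_Icc : IsCompact R).exists_bound_of_continuousOn hP
  refine ⟨fun x => fderivWithin ℝ F R (t, x) ((1 : ℝ), (0 : ℝ)), hslice t htI _ hcd,
    fun x hxx => (hder t ht x hxx).deriv, ?_⟩
  have hsub : Set.uIoc xL xR ⊆ Set.Icc xL xR := by
    rw [Set.uIoc_of_le hx.le]; exact Set.Ioc_subset_Icc_self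
  have hi : ∀ s ∈ Set.Icc (0 : ℝ) tf, ∀ G : ℝ × ℝ → ℝ, ContinuousOn G R →
      IntervalIntegrable (fun x => G (s, x)) volume xL xR := by
    intro s hs G hG
    exact ContinuousOn.intervalIntegrable (by rw [hui]; exact hslice s hs G hG)
  have hF2 : ContinuousOn (fun p => (F p) ^ 2) R := hf.continuousOn.pow 2
  have key := intervalIntegral.hasDerivAt_integral_of_dominated_loc_of_deriv_le
    (μ := volume) (a := xL) (b := xR) (x₀ := t) (s := Set.Ioo (0 : ℝ) tf)
    (F := fun s x => (f s x) ^ 2)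
    (F' := fun s x => 2 * (f s x * fderivWithin ℝ F R (s, x) ((1 : ℝ), (0 : ℝ))))
    (bound := fun _ => C) (Ioo_mem_nhds ht.1 ht.2)
    (by
      filter_upwards [Ioo_mem_nhds ht.1 ht.2] with s hs
      exact (intervalIntegrable_iff.1 (hi s (Set.Ioo_subset_Icc_self hs) _ hF2)).aestronglyMeasurable)
    (hi t htI _ hF2)
    (intervalIntegrable_iff.1 (hi t htI _ hP)).aestronglyMeasurable
    (by
      refine Filter.Eventually.of_forall fun x hxx s hs => ?_
      exact hC (s, x) ⟨Set.Ioo_subset_Icc_self hs, hsub hxx⟩)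
    (by simp)
    (by
      refine Filter.Eventually.of_forall fun x hxx s hs => ?_
      have := (hder s hs x (hsub hxx)).pow 2
      refine this.congr_deriv ?_
      push_cast
      ring)
  exact key.2.deriv

/-- The differential energy inequality for the material temperature error `T̃` in the
convergence analysis: it follows by testing the temperature-error equation by `T̃`,
substituting `ρ̃ = ⟨Ĩ⟩ − (ε/√σ₀) r₄`, using the quartic lower bound, Cauchy–Schwarz,
and Young's inequality with parameter `α₂ > 0`. -/
theorem energy_inequality_for_temperature_error
    (a c Cv ε σ₀ : ℝ) (ha : 0 < a) (hc : 0 < c) (hCv : 0 < Cv)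
    (hε : 0 < ε) (hσ₀ : 0 < σ₀)
    (xL xR : ℝ) (hx : xL < xR) (tf : ℝ) (htf : 0 < tf)
    (σmin σmax Tmin Tmax : ℝ) (hσmin : 0 < σmin) (hTmin : 0 < Tmin)
    (σ T Tstar r3 r4 : ℝ → ℝ → ℝ) (Tt ρt : ℝ → ℝ → ℝ) (It : ℝ → ℝ → ℝ → ℝ)
    (hσ : ContinuousOn (fun p : ℝ × ℝ => σ p.1 p.2)
      (Set.Icc (0 : ℝ) tf ×ˢ Set.Icc xL xR))
    (hT : ContinuousOn (fun p : ℝ × ℝ => T p.1 p.2)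
      (Set.Icc (0 : ℝ) tf ×ˢ Set.Icc xL xR))
    (hTstar : ContinuousOn (fun p : ℝ × ℝ => Tstar p.1 p.2)
      (Set.Icc (0 : ℝ) tf ×ˢ Set.Icc xL xR))
    (hr3 : ContinuousOn (fun p : ℝ × ℝ => r3 p.1 p.2)
      (Set.Icc (0 : ℝ) tf ×ˢ Set.Icc xL xR))
    (hr4 : ContinuousOn (fun p : ℝ × ℝ => r4 p.1 p.2)
      (Set.Icc (0 : ℝ) tf ×ˢ Set.Icc xL xR))
    (hItc : ContinuousOn (fun p : ℝ × ℝ × ℝ => It p.1 p.2.1 p.2.2)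
      (Set.Icc (0 : ℝ) tf ×ˢ (Set.Icc xL xR ×ˢ Set.Icc (-1 : ℝ) 1)))
    (hσbd : ∀ t ∈ Set.Icc (0 : ℝ) tf, ∀ x ∈ Set.Icc xL xR,
      σmin ≤ σ t x ∧ σ t x ≤ σmax)
    (hTbd : ∀ t ∈ Set.Icc (0 : ℝ) tf, ∀ x ∈ Set.Icc xL xR,
      Tmin ≤ T t x ∧ T t x ≤ Tmax ∧ Tmin ≤ Tstar t x ∧ Tstar t x ≤ Tmax)
    (hTtdef : ∀ t x, Tt t x = T t x - Tstar t x)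
    (hTt : ContDiffOn ℝ 1 (fun p : ℝ × ℝ => Tt p.1 p.2)
      (Set.Icc (0 : ℝ) tf ×ˢ Set.Icc xL xR))
    (hρtdef : ∀ t x, ρt t x
      = avg (fun μ => It t x μ) - (ε / Real.sqrt σ₀) * r4 t x)
    (heq : ∀ t ∈ Set.Ioo (0 : ℝ) tf, ∀ x ∈ Set.Ioo xL xR,
      ε ^ 2 * Cv * deriv (fun s => Tt s x) t - 2 * σ t x * ρt t x
          + σ t x * a * c * ((T t x) ^ 4 - (Tstar t x) ^ 4) = r3 t x) :
    ∀ α₂ > (0 : ℝ), ∀ t ∈ Set.Ioo (0 : ℝ) tf,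
      (ε ^ 2 * Cv / 2) * deriv (fun s => ∫ x in xL..xR, (Tt s x) ^ 2) t
        + 4 * a * c * σmin * Tmin ^ 3 * (∫ x in xL..xR, (Tt t x) ^ 2)
      ≤ 3 * α₂ * (∫ x in xL..xR, (Tt t x) ^ 2)
        + (1 / (4 * α₂)) * (∫ x in xL..xR, (r3 t x) ^ 2)
        + (σmax ^ 2 / (2 * α₂)) * (∫ x in xL..xR, ∫ μ in (-1 : ℝ)..1, (It t x μ) ^ 2)
        + (ε ^ 2 * σmax ^ 2 / (α₂ * σ₀)) * (∫ x in xL..xR, (r4 t x) ^ 2) := by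
  intro α hα t ht
  obtain ⟨g, hgc, hgd, hgi⟩ := deriv_aux Tt tf xL xR hx htf hTt t ht
  have htI : t ∈ Set.Icc (0 : ℝ) tf := Set.Ioo_subset_Icc_self ht
  have hslice : ∀ G : ℝ → ℝ → ℝ, ContinuousOn (fun p : ℝ × ℝ => G p.1 p.2)
      (Set.Icc (0 : ℝ) tf ×ˢ Set.Icc xL xR) → ContinuousOn (fun x => G t x) (Set.Icc xL xR) := by
    intro G hG
    exact hG.comp (f := fun x : ℝ => (t, x)) (by fun_prop) (fun x hxx => ⟨htI, hxx⟩)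
  have hui : Set.uIcc xL xR = Set.Icc xL xR := Set.uIcc_of_le hx.le
  have hi : ∀ G : ℝ → ℝ, ContinuousOn G (Set.Icc xL xR) →
      IntervalIntegrable G volume xL xR := fun G hG =>
    ContinuousOn.intervalIntegrable (by rw [hui]; exact hG)
  have cT := hslice Tt hTt.continuousOn
  have iT := hi (fun x => (Tt t x) ^ 2) (cT.pow 2)
  have iD := hi (fun x => Tt t x * g x) (cT.mul hgc)
  have i3 := hi (fun x => (r3 t x) ^ 2) ((hslice r3 hr3).pow 2)
  have i4 := hi (fun x => (r4 t x) ^ 2) ((hslice r4 hr4).pow 2)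
  have iJ : IntervalIntegrable (fun x => ∫ μ in (-1 : ℝ)..1, (It t x μ) ^ 2) volume xL xR := by
    apply hi
    have h11 : (-1 : ℝ) ≤ 1 := by norm_num
    have hK : Continuous (fun p : ℝ × ℝ =>
        (It t (Set.projIcc xL xR hx.le p.1) (Set.projIcc (-1 : ℝ) 1 h11 p.2)) ^ 2) := by
      refine Continuous.pow ?_ 2
      refine hItc.comp_continuous (f := fun p : ℝ × ℝ =>
        (t, ((Set.projIcc xL xR hx.le p.1 : ℝ), (Set.projIcc (-1 : ℝ) 1 h11 p.2 : ℝ)))) ?_ ?_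
      · have := continuous_projIcc (h := hx.le)
        have := continuous_projIcc (h := h11)
        fun_prop
      · intro p
        exact ⟨htI, Subtype.coe_prop _, Subtype.coe_prop _⟩
    have := intervalIntegral.continuous_parametric_intervalIntegral_of_continuous'
      (μ := volume) (f := fun x μ =>
        (It t (Set.projIcc xL xR hx.le x) (Set.projIcc (-1 : ℝ) 1 h11 μ)) ^ 2) hK (-1) 1
    refine this.continuousOn.congr fun x hxx => ?_
    refine intervalIntegral.integral_congr fun μ hμ => ?_
    rw [Set.uIcc_of_le h11] at hμ
    simp only [Set.projIcc_of_mem hx.le hxx, Set.projIcc_of_mem h11 hμ]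
  have main := intervalIntegral.integral_mono_on_of_le_Ioo hx.le
    ((iD.const_mul (ε ^ 2 * Cv)).add (iT.const_mul (4 * a * c * σmin * Tmin ^ 3)))
    ((((iT.const_mul (3 * α)).add (i3.const_mul (1 / (4 * α)))).add
      (iJ.const_mul (σmax ^ 2 / (2 * α)))).add
      (i4.const_mul (ε ^ 2 * σmax ^ 2 / (α * σ₀))))
    (by
      intro x hxx
      have hxI := Set.Ioo_subset_Icc_self hxx
      have hA := avg_sq_le_aux (fun μ => It t x μ)
        (hItc.comp (f := fun μ : ℝ => (t, (x, μ))) (by fun_prop)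
          (fun μ hμ => ⟨htI, hxI, hμ⟩))
      have he := heq t ht x hxx
      rw [hgd x hxI, hρtdef] at he
      have hb := hTbd t htI x hxI
      have hs := hσbd t htI x hxI
      have := pointwise_aux a c ε σ₀ σmin σmax Tmin α (σ t x) (T t x) (Tstar t x) (r3 t x)
        (r4 t x) _ _ (g x) (ε ^ 2 * Cv) ha hc hσ₀ hσmin hTmin hα hs.1 hs.2 hb.1 hb.2.2.1 hA he
      rw [← hTtdef] at this
      exact this)
  rw [intervalIntegral.integral_add (iD.const_mul _) (iT.const_mul _),
    intervalIntegral.integral_add (((iT.const_mul _).add (i3.const_mul _)).add (iJ.const_mul _))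
      (i4.const_mul _),
    intervalIntegral.integral_add ((iT.const_mul _).add (i3.const_mul _)) (iJ.const_mul _),
    intervalIntegral.integral_add (iT.const_mul _) (i3.const_mul _)] at main
  simp only [intervalIntegral.integral_const_mul] at main
  rw [hgi, intervalIntegral.integral_const_mul]
  linarith
end

section
/- Let c, ε, σ₀ > 0 be constants, x_L < x_R, t_f > 0, and let σ : [0,t_f] × [x_L,x_R] → ℝ be continuous with 0 ≤ σ(t,x) ≤ σ_max. Let ρ : [0,t_f] × [x_L,x_R] → ℝ and g : [0,t_f] × [x_L,x_R] × [−1,1] → ℝ be continuously differentiable and suppose g satisfies the microscopic equation (ε²/c)∂_t g + ε μ ∂_x g − ε⟨μ ∂_x g⟩ + √σ₀ μ ∂_x ρ + σ g = 0 pointwise on (0,t_f) × (x_L,x_R) × (−1,1). If ⟨g(0,x,·)⟩ = 0 for all x ∈ [x_L,x_R], then ⟨g(t,x,·)⟩ = 0 for all (t,x) ∈ [0,t_f] × [x_L,x_R]. -/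
open MeasureTheory

/-- Propagation of the zero-mean property of the microscopic part `g` in the micro–macro
decomposition: averaging the microscopic equation over `μ` yields the linear homogeneous
ODE `(ε²/c) ∂ₜ⟨g⟩ + σ ⟨g⟩ = 0` at each `x`, so `⟨g⟩ = 0` propagates from the initial
time. -/
theorem zero_mean_propagation
    (c ε σ₀ : ℝ) (hc : 0 < c) (hε : 0 < ε) (hσ₀ : 0 < σ₀)
    (xL xR : ℝ) (hx : xL < xR) (tf : ℝ) (htf : 0 < tf)
    (σmax : ℝ)
    (σ : ℝ → ℝ → ℝ)
    (hσ : ContinuousOn (fun p : ℝ × ℝ => σ p.1 p.2)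
      (Set.Icc (0 : ℝ) tf ×ˢ Set.Icc xL xR))
    (hσbd : ∀ t ∈ Set.Icc (0 : ℝ) tf, ∀ x ∈ Set.Icc xL xR,
      0 ≤ σ t x ∧ σ t x ≤ σmax)
    (ρ : ℝ → ℝ → ℝ) (g : ℝ → ℝ → ℝ → ℝ)
    (hρ : ContDiffOn ℝ 1 (fun p : ℝ × ℝ => ρ p.1 p.2)
      (Set.Icc (0 : ℝ) tf ×ˢ Set.Icc xL xR))
    (hg : ContDiffOn ℝ 1 (fun p : ℝ × ℝ × ℝ => g p.1 p.2.1 p.2.2)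
      (Set.Icc (0 : ℝ) tf ×ˢ (Set.Icc xL xR ×ˢ Set.Icc (-1 : ℝ) 1)))
    (heq : ∀ t ∈ Set.Ioo (0 : ℝ) tf, ∀ x ∈ Set.Ioo xL xR, ∀ μ ∈ Set.Ioo (-1 : ℝ) 1,
      (ε ^ 2 / c) * deriv (fun s => g s x μ) t + ε * μ * deriv (fun y => g t y μ) x
          - ε * avg (fun μ' => μ' * deriv (fun y => g t y μ') x)
          + Real.sqrt σ₀ * μ * deriv (fun y => ρ t y) x + σ t x * g t x μ = 0)
    (h0 : ∀ x ∈ Set.Icc xL xR, avg (g 0 x) = 0) :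
    ∀ t ∈ Set.Icc (0 : ℝ) tf, ∀ x ∈ Set.Icc xL xR, avg (g t x) = 0 := by
  set K : Set (ℝ × ℝ × ℝ) :=
    Set.Icc (0 : ℝ) tf ×ˢ (Set.Icc xL xR ×ˢ Set.Icc (-1 : ℝ) 1) with hK
  set G : ℝ × ℝ × ℝ → ℝ := fun p => g p.1 p.2.1 p.2.2 with hG
  have hKu : UniqueDiffOn ℝ K :=
    (uniqueDiffOn_Icc htf).prod ((uniqueDiffOn_Icc hx).prod (uniqueDiffOn_Icc (by norm_num)))
  have hKc : IsCompact K := isCompact_Icc.prod (isCompact_Icc.prod isCompact_Icc)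
  have hGc : ContinuousOn G K := hg.continuousOn
  have hDc : ContinuousOn (fderivWithin ℝ G K) K := hg.continuousOn_fderivWithin hKu le_rfl
  have hGd : ∀ p ∈ K, HasFDerivWithinAt G (fderivWithin ℝ G K p) K p := fun p hp =>
    ((hg.differentiableOn one_ne_zero) p hp).hasFDerivWithinAt
  have hgt : ∀ t ∈ Set.Ioo (0 : ℝ) tf, ∀ x ∈ Set.Icc xL xR, ∀ μ ∈ Set.Icc (-1 : ℝ) 1,
      HasDerivAt (fun s => g s x μ) (fderivWithin ℝ G K (t, x, μ) (1, 0, 0)) t := by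
    intro t ht x hx' μ hμ
    have h1 : HasDerivWithinAt (fun s : ℝ => ((s, x, μ) : ℝ × ℝ × ℝ)) (1, 0, 0)
        (Set.Icc 0 tf) t :=
      (hasDerivWithinAt_id t _).prodMk (hasDerivWithinAt_const t _ _)
    have h2 := (hGd (t, x, μ) ⟨Set.Ioo_subset_Icc_self ht, hx', hμ⟩).comp_hasDerivWithinAt t h1
      (show Set.MapsTo _ _ K from fun s hs => ⟨hs, hx', hμ⟩)
    exact h2.hasDerivAt (Icc_mem_nhds ht.1 ht.2)
  have hgx : ∀ t ∈ Set.Icc (0 : ℝ) tf, ∀ x ∈ Set.Ioo xL xR, ∀ μ ∈ Set.Icc (-1 : ℝ) 1,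
      HasDerivAt (fun y => g t y μ) (fderivWithin ℝ G K (t, x, μ) (0, 1, 0)) x := by
    intro t ht x hx' μ hμ
    have h1 : HasDerivWithinAt (fun s : ℝ => ((t, s, μ) : ℝ × ℝ × ℝ)) (0, 1, 0)
        (Set.Icc xL xR) x :=
      (hasDerivWithinAt_const x _ _).prodMk
        ((hasDerivWithinAt_id x _).prodMk (hasDerivWithinAt_const x _ _))
    have h2 := (hGd (t, x, μ) ⟨ht, Set.Ioo_subset_Icc_self hx', hμ⟩).comp_hasDerivWithinAt x h1
      (show Set.MapsTo _ _ K from fun s hs => ⟨ht, hs, hμ⟩)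
    exact h2.hasDerivAt (Icc_mem_nhds hx'.1 hx'.2)
  -- continuity in the angular variable
  have hline : ∀ t ∈ Set.Icc (0 : ℝ) tf, ∀ x ∈ Set.Icc xL xR,
      Set.MapsTo (fun μ : ℝ => ((t, x, μ) : ℝ × ℝ × ℝ)) (Set.Icc (-1) 1) K :=
    fun t ht x hx' μ hμ => ⟨ht, hx', hμ⟩
  have hlinec : ∀ t x : ℝ, ContinuousOn (fun μ : ℝ => ((t, x, μ) : ℝ × ℝ × ℝ))
      (Set.Icc (-1) 1) := fun t x => by fun_prop
  have hcg : ∀ t ∈ Set.Icc (0 : ℝ) tf, ∀ x ∈ Set.Icc xL xR,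
      ContinuousOn (g t x) (Set.Icc (-1) 1) := fun t ht x hx' =>
    hGc.comp (hlinec t x) (hline t ht x hx')
  have hcD : ∀ t ∈ Set.Icc (0 : ℝ) tf, ∀ x ∈ Set.Icc xL xR, ∀ v : ℝ × ℝ × ℝ,
      ContinuousOn (fun μ => fderivWithin ℝ G K (t, x, μ) v) (Set.Icc (-1) 1) :=
    fun t ht x hx' v =>
      (hDc.comp (hlinec t x) (hline t ht x hx')).clm_apply continuousOn_const
  have hle : (-1 : ℝ) ≤ 1 := by norm_num
  -- continuity of the mean
  have hA : ContinuousOn (fun p : ℝ × ℝ => ∫ μ in (-1 : ℝ)..1, g p.1 p.2 μ)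
      (Set.Icc 0 tf ×ˢ Set.Icc xL xR) := by
    have hP : Continuous (fun q : (ℝ × ℝ) × ℝ =>
        G (Set.projIcc 0 tf htf.le q.1.1, Set.projIcc xL xR hx.le q.1.2,
          Set.projIcc (-1) 1 hle q.2)) := by
      apply hGc.comp_continuous
      · have h1 := continuous_projIcc (h := htf.le)
        have h2 := continuous_projIcc (h := hx.le)
        have h3 := continuous_projIcc (h := hle)
        fun_prop
      · intro q
        exact ⟨Subtype.coe_prop _, Subtype.coe_prop _, Subtype.coe_prop _⟩
    have hI := intervalIntegral.continuous_parametric_intervalIntegral_of_continuous'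
      (μ := volume) (f := fun (p : ℝ × ℝ) (μ : ℝ) => 
        G (Set.projIcc 0 tf htf.le p.1, Set.projIcc xL xR hx.le p.2,
          Set.projIcc (-1) 1 hle μ)) hP (-1) 1
    refine hI.continuousOn.congr ?_
    intro p hp
    apply intervalIntegral.integral_congr
    intro μ hμ
    rw [Set.uIcc_of_le hle] at hμ
    simp only [hG, Set.projIcc_of_mem _ hp.1, Set.projIcc_of_mem _ hp.2, Set.projIcc_of_mem _ hμ]
  obtain ⟨C, hC⟩ := hKc.exists_bound_of_continuousOn
    (hDc.clm_apply (continuousOn_const (c := ((1, 0, 0) : ℝ × ℝ × ℝ))))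
  have hInt : ∀ f : ℝ → ℝ, ContinuousOn f (Set.Icc (-1) 1) →
      IntervalIntegrable f volume (-1) 1 := fun f hf =>
    ContinuousOn.intervalIntegrable (by rwa [Set.uIcc_of_le hle])
  have hMeas : ∀ f : ℝ → ℝ, ContinuousOn f (Set.Icc (-1) 1) →
      AEStronglyMeasurable f (volume.restrict (Set.uIoc (-1) 1)) := fun f hf =>
    (intervalIntegrable_iff.mp (hInt f hf)).aestronglyMeasurable
  have hmem : ∀ μ ∈ Set.uIoc (-1 : ℝ) 1, μ ∈ Set.Icc (-1 : ℝ) 1 := fun μ hμ => by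
    rw [Set.uIoc_of_le hle] at hμ
    exact Set.Ioc_subset_Icc_self hμ
  -- differentiation under the integral
  have hAd : ∀ t ∈ Set.Ioo (0 : ℝ) tf, ∀ x ∈ Set.Icc xL xR,
      HasDerivAt (fun s => ∫ μ in (-1 : ℝ)..1, g s x μ)
        (∫ μ in (-1 : ℝ)..1, fderivWithin ℝ G K (t, x, μ) (1, 0, 0)) t := by
    intro t ht x hx'
    have htI := Set.Ioo_subset_Icc_self ht
    refine (intervalIntegral.hasDerivAt_integral_of_dominated_loc_of_deriv_le
      (F := fun s μ => g s x μ)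
      (F' := fun s μ => fderivWithin ℝ G K (s, x, μ) (1, 0, 0)) (bound := fun _ => C)
      (s := Set.Ioo 0 tf) (Ioo_mem_nhds ht.1 ht.2) ?_ (hInt _ (hcg t htI x hx'))
      (hMeas _ (hcD t htI x hx' _)) ?_ (by simp) ?_).2
    · filter_upwards [Ioo_mem_nhds ht.1 ht.2] with s hs
      exact hMeas _ (hcg s (Set.Ioo_subset_Icc_self hs) x hx')
    · exact Filter.Eventually.of_forall fun μ hμ s hs =>
        hC (s, x, μ) ⟨Set.Ioo_subset_Icc_self hs, hx', hmem μ hμ⟩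
    · exact Filter.Eventually.of_forall fun μ hμ s hs => hgt s hs x hx' μ (hmem μ hμ)
  -- averaged equation
  have hode : ∀ t ∈ Set.Ioo (0 : ℝ) tf, ∀ x ∈ Set.Ioo xL xR,
      (ε ^ 2 / c) * (∫ μ in (-1 : ℝ)..1, fderivWithin ℝ G K (t, x, μ) (1, 0, 0))
        + σ t x * ∫ μ in (-1 : ℝ)..1, g t x μ = 0 := by
    intro t ht x hx'
    have htI := Set.Ioo_subset_Icc_self ht
    have hxI := Set.Ioo_subset_Icc_self hx'
    set J := ∫ μ in (-1 : ℝ)..1, μ * fderivWithin ℝ G K (t, x, μ) (0, 1, 0) with hJ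
    have havg : avg (fun μ' => μ' * deriv (fun y => g t y μ') x) = (1 / 2) * J := by
      unfold avg
      congr 1
      apply intervalIntegral.integral_congr
      intro μ hμ
      rw [Set.uIcc_of_le hle] at hμ
      simp only [(hgx t htI x hx' μ hμ).deriv]
    have i1 := (hInt _ (hcD t htI x hxI (1, 0, 0))).const_mul (ε ^ 2 / c)
    have i2 := (hInt (fun μ => μ * fderivWithin ℝ G K (t, x, μ) (0, 1, 0))
      (continuousOn_id.mul (hcD t htI x hxI (0, 1, 0)))).const_mul ε
    have i3 : IntervalIntegrable (fun _ : ℝ => ε * ((1 / 2) * J)) volume (-1) 1 :=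
      hInt _ continuousOn_const
    have i4 : IntervalIntegrable
        (fun μ : ℝ => (Real.sqrt σ₀ * deriv (fun y => ρ t y) x) * μ) volume (-1) 1 :=
      hInt _ (by fun_prop)
    have h4 : ∫ μ in (-1 : ℝ)..1, (Real.sqrt σ₀ * deriv (fun y => ρ t y) x) * μ = 0 := by
      rw [intervalIntegral.integral_const_mul, integral_id]
      norm_num
    have i5 := (hInt _ (hcg t htI x hxI)).const_mul (σ t x)
    have hz : ∫ μ in (-1 : ℝ)..1, ((ε ^ 2 / c) * fderivWithin ℝ G K (t, x, μ) (1, 0, 0)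
        + ε * (μ * fderivWithin ℝ G K (t, x, μ) (0, 1, 0)) - ε * ((1 / 2) * J)
        + (Real.sqrt σ₀ * deriv (fun y => ρ t y) x) * μ + σ t x * g t x μ) = 0 := by
      rw [intervalIntegral.integral_of_le hle, integral_Ioc_eq_integral_Ioo]
      apply setIntegral_eq_zero_of_forall_eq_zero
      intro μ hμ
      have h := heq t ht x hx' μ hμ
      have hμI := Set.Ioo_subset_Icc_self hμ
      rw [havg, (hgx t htI x hx' μ hμI).deriv, (hgt t ht x hxI μ hμI).deriv] at h
      linarith
    rw [intervalIntegral.integral_add (((i1.add i2).sub i3).add i4) i5,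
      intervalIntegral.integral_add ((i1.add i2).sub i3) i4,
      intervalIntegral.integral_sub (i1.add i2) i3,
      intervalIntegral.integral_add i1 i2, h4] at hz
    simp only [intervalIntegral.integral_const_mul, intervalIntegral.integral_const,
      smul_eq_mul, ← hJ] at hz
    linarith
  -- interior in x
  have hint : ∀ t ∈ Set.Icc (0 : ℝ) tf, ∀ x ∈ Set.Ioo xL xR,
      ∫ μ in (-1 : ℝ)..1, g t x μ = 0 := by
    intro t ht x hx'
    have hxI := Set.Ioo_subset_Icc_self hx'
    have hanti : AntitoneOn (fun s => (∫ μ in (-1 : ℝ)..1, g s x μ) ^ 2) (Set.Icc 0 tf) := by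
      have hcont : ContinuousOn (fun s => ∫ μ in (-1 : ℝ)..1, g s x μ) (Set.Icc 0 tf) :=
        hA.comp (f := fun s : ℝ => ((s, x) : ℝ × ℝ)) (by fun_prop) (fun s hs => ⟨hs, hxI⟩)
      apply antitoneOn_of_deriv_nonpos (convex_Icc 0 tf) (hcont.pow 2)
      · rw [interior_Icc]
        intro s hs
        exact ((hAd s hs x hxI).pow 2).differentiableAt.differentiableWithinAt
      · rw [interior_Icc]
        intro s hs
        have hd := ((hAd s hs x hxI).pow 2).deriv
        rw [hd]
        have ho := hode s hs x hx'
        have hs0 := (hσbd s (Set.Ioo_subset_Icc_self hs) x hxI).1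
        set a := ∫ μ in (-1 : ℝ)..1, g s x μ
        set b := ∫ μ in (-1 : ℝ)..1, fderivWithin ℝ G K (s, x, μ) (1, 0, 0)
        have hk : 0 < ε ^ 2 / c := by positivity
        have h3 : (ε ^ 2 / c) * (a * b) ≤ 0 := by
          have : (ε ^ 2 / c) * (a * b) = - (σ s x * a ^ 2) := by linear_combination a * ho
          rw [this]
          have := mul_nonneg hs0 (sq_nonneg a)
          linarith
        have h4 : a * b ≤ 0 := by
          by_contra hcon
          have := mul_pos hk (not_le.mp hcon)
          linarith
        norm_num
        linarith
    have h1 := hanti (Set.left_mem_Icc.mpr htf.le) ht ht.1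
    have h2 : ∫ μ in (-1 : ℝ)..1, g 0 x μ = 0 := by
      have := h0 x hxI
      unfold avg at this
      linarith
    simp only [h2] at h1
    have := sq_nonneg (∫ μ in (-1 : ℝ)..1, g t x μ)
    exact pow_eq_zero_iff (two_ne_zero) |>.mp (by linarith)
  intro t ht x hx'
  have hcx : ContinuousOn (fun y => ∫ μ in (-1 : ℝ)..1, g t y μ) (Set.Icc xL xR) :=
    hA.comp (f := fun y : ℝ => ((t, y) : ℝ × ℝ)) (by fun_prop) (fun s hs => ⟨ht, hs⟩)
  have hfin : Set.EqOn (fun y => ∫ μ in (-1 : ℝ)..1, g t y μ) (fun _ => 0) (Set.Icc xL xR) := by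
    refine Set.EqOn.of_subset_closure (s := Set.Ioo xL xR) (fun y hy => hint t ht y hy) hcx
      continuousOn_const Set.Ioo_subset_Icc_self ?_
    rw [closure_Ioo hx.ne]
  have := hfin hx'
  unfold avg
  simp only at this
  rw [this, mul_zero]
end
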